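/- arXiv:1911.13294 — 8 statements merged into one kernel-verified Lean document; each statement's English description precedes it below -/
import Mathlib

section
/- Let d, δ ≥ 2 be integers. Every finite tree with a proper white/black 2-coloring of its vertices admits a set X of edges such that every white vertex of degree exactly d is incident to exactly one edge of X and every black vertex of degree exactly δ is incident to exactly δ−1 edges of X. -/
/-- The number of edges of `X` incident to `v` (edges of the graph `G`). -/
def degIn {V : Type*} [Fintype V] [DecidableEq V] (G : SimpleGraph V) [DecidableRel G.Adj]
    (X : Finset (Sym2 V)) (v : V) : ℕ :=
  ((G.neighborFinset v).filter (fun u => s(v, u) ∈ X)).card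

/-!
Root every component of the forest at a vertex of degree at most one, and let the height of a
vertex be its distance to the root. Every vertex other than a root then has exactly one lower
neighbor, and adjacent vertices have different heights. Put into `X` the edges whose white end is
the higher one: a white vertex meets `X` exactly in the edges to its lower neighbors, a black
vertex in all edges except those to its lower neighbors. Vertices of degree at least two are never
roots, so the two counts are `1` and the degree minus one.
-/

open SimpleGraph

section Acyclic

variable {V : Type*} {G : SimpleGraph V} {r u v w : V}

theorem exists_adj_dist_add_one_eq (hr : G.Reachable r v) (hne : v ≠ r) :
    ∃ u, G.Adj v u ∧ G.dist r u + 1 = G.dist r v := by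
  obtain ⟨p, hp⟩ := hr.symm.exists_walk_length_eq_dist
  cases p with
  | nil => exact absurd rfl hne
  | @cons _ u _ hvu q =>
    rw [Walk.length_cons, dist_comm] at hp
    have hle : G.dist r u ≤ q.length := dist_comm (G := G) ▸ dist_le q
    have hdiff := hvu.diff_dist_adj (u := r)
    exact ⟨u, hvu, by lia⟩

theorem eq_of_adj_of_dist_add_one_eq (hG : G.IsAcyclic) (hr : G.Reachable r v)
    (hu : G.Adj v u) (hw : G.Adj v w) (hdu : G.dist r u + 1 = G.dist r v)
    (hdw : G.dist r w + 1 = G.dist r v) : u = w := by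
  have exists_path_penultimate_eq {x : V} (hx : G.Adj v x)
      (hdx : G.dist r x + 1 = G.dist r v) : ∃ p : G.Path r v, p.1.penultimate = x := by
    obtain ⟨q, hq⟩ := (hr.trans hx.reachable).exists_walk_length_eq_dist
    have hpath : (q.concat hx.symm).IsPath :=
      Walk.isPath_of_length_eq_dist _ (by rw [Walk.length_concat, hq, hdx])
    exact ⟨⟨_, hpath⟩, Walk.penultimate_concat ..⟩
  obtain ⟨p, rfl⟩ := exists_path_penultimate_eq hu hdu
  obtain ⟨q, rfl⟩ := exists_path_penultimate_eq hw hdw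
  rw [(hG.subsingleton_path r v).elim p q]

theorem dist_add_one_eq_of_adj_of_dist_lt (hvu : G.Adj v u) (hlt : G.dist r u < G.dist r v) :
    G.dist r u + 1 = G.dist r v := by
  have := hvu.diff_dist_adj (u := r)
  lia

theorem existsUnique_adj_dist_lt (hG : G.IsAcyclic) (hr : G.Reachable r v) (hne : v ≠ r) :
    ∃! u, G.Adj v u ∧ G.dist r u < G.dist r v := by
  obtain ⟨u, hvu, hdu⟩ := exists_adj_dist_add_one_eq hr hne
  refine ⟨u, ⟨hvu, by lia⟩, fun w ⟨hvw, hlt⟩ ↦ ?_⟩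
  exact eq_of_adj_of_dist_add_one_eq hG hr hvw hvu (dist_add_one_eq_of_adj_of_dist_lt hvw hlt) hdu

theorem exists_reachable_degree_le_one [Finite V] [G.LocallyFinite] (hG : G.IsAcyclic) (v : V) :
    ∃ r, G.Reachable v r ∧ G.degree r ≤ 1 := by
  obtain ⟨r, hr, hmax⟩ := Set.exists_max_image {u | G.Reachable v u} (G.dist v)
    (Set.toFinite _) ⟨v, Reachable.rfl⟩
  have dist_neighbor {u : V} (hru : G.Adj r u) : G.dist v u + 1 = G.dist v r := by
    have hle : G.dist v u ≤ G.dist v r := hmax u (hr.trans hru.reachable)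
    exact dist_add_one_eq_of_adj_of_dist_lt hru (hle.lt_of_ne (hG.dist_ne_of_adj hru hr).symm)
  refine ⟨r, hr, Finset.card_le_one.2 fun u hu w hw ↦ ?_⟩
  rw [mem_neighborFinset] at hu hw
  exact eq_of_adj_of_dist_add_one_eq hG hr hu hw (dist_neighbor hu) (dist_neighbor hw)

theorem exists_root_degree_le_one [Finite V] [G.LocallyFinite] (hG : G.IsAcyclic) :
    ∃ root : V → V, (∀ ⦃u v⦄, G.Adj u v → root u = root v) ∧
      ∀ v, G.Reachable (root v) v ∧ G.degree (root v) ≤ 1 := by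
  have exists_root (c : G.ConnectedComponent) :
      ∃ r, G.connectedComponentMk r = c ∧ G.degree r ≤ 1 := by
    obtain ⟨v, rfl⟩ := c.exists_rep
    obtain ⟨r, hvr, hdeg⟩ := exists_reachable_degree_le_one hG v
    exact ⟨r, ConnectedComponent.sound hvr.symm, hdeg⟩
  choose root mk_root degree_root using exists_root
  refine ⟨fun v ↦ root (G.connectedComponentMk v), fun u v huv ↦ ?_, fun v ↦ ?_⟩
  · exact congrArg root (ConnectedComponent.sound huv.reachable)
  · exact ⟨ConnectedComponent.exact (mk_root _), degree_root _⟩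

end Acyclic

section Height

variable {V α : Type*} [Fintype V] [LinearOrder α] (G : SimpleGraph V) [DecidableRel G.Adj]

/-- The neighbors of `v` lying below `v` with respect to the height function `h`; in a rooted
forest with `h` the distance to the root, this is the parent of `v`. -/
def lowerNeighborFinset (h : V → α) (v : V) : Finset V :=
  {u ∈ G.neighborFinset v | h u < h v}

/-- The edges whose white end lies above its black end with respect to the height function `h`,
where `true` stands for white. -/
def whiteDescendingEdges [DecidableEq V] (C : G.Coloring Bool) (h : V → α) : Finset (Sym2 V) :=
  {e ∈ G.edgeFinset | ∀ w ∈ e, ∀ b ∈ e, C w = true → C b = false → h b < h w}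

variable {G}

theorem card_lowerNeighborFinset_dist_root {root : V → V} {v : V} (hG : G.IsAcyclic)
    (root_eq : ∀ ⦃u v⦄, G.Adj u v → root u = root v) (hreach : G.Reachable (root v) v)
    (hne : v ≠ root v) : (lowerNeighborFinset G (fun u ↦ G.dist (root u) u) v).card = 1 := by
  obtain ⟨p, ⟨hvp, hlt⟩, hunique⟩ := existsUnique_adj_dist_lt hG hreach hne
  refine Finset.card_eq_one.2 ⟨p, Finset.ext fun u ↦ ?_⟩
  rw [lowerNeighborFinset, Finset.mem_filter, mem_neighborFinset, Finset.mem_singleton]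
  constructor
  · rintro ⟨hvu, hu⟩
    exact hunique u ⟨hvu, root_eq hvu ▸ hu⟩
  · rintro rfl
    exact ⟨hvp, (root_eq hvp).symm ▸ hlt⟩

theorem exists_height_card_lowerNeighborFinset_eq_one (hG : G.IsAcyclic) :
    ∃ h : V → ℕ, (∀ ⦃u v⦄, G.Adj u v → h u ≠ h v) ∧
      ∀ v, 2 ≤ G.degree v → (lowerNeighborFinset G h v).card = 1 := by
  obtain ⟨root, root_eq, hroot⟩ := exists_root_degree_le_one hG
  refine ⟨fun v ↦ G.dist (root v) v, fun u v huv ↦ ?_, fun v hv ↦ ?_⟩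
  · simpa only [root_eq huv] using hG.dist_ne_of_adj huv (root_eq huv ▸ (hroot u).1)
  · have hne : v ≠ root v := fun heq ↦ by
      have : G.degree v ≤ 1 := heq ▸ (hroot v).2
      lia
    exact card_lowerNeighborFinset_dist_root hG root_eq (hroot v).1 hne

variable [DecidableEq V] {C : G.Coloring Bool} {h : V → α} {w b : V}

theorem whiteDescendingEdges_subset_edgeSet : ↑(whiteDescendingEdges G C h) ⊆ G.edgeSet :=
  fun _ he ↦ mem_edgeFinset.1 (Finset.mem_filter.1 he).1

theorem mem_whiteDescendingEdges_iff (hwb : G.Adj w b) (hw : C w = true) (hb : C b = false) :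
    s(w, b) ∈ whiteDescendingEdges G C h ↔ h b < h w := by
  simp [whiteDescendingEdges, hwb, hw, hb]

theorem degIn_whiteDescendingEdges_of_white (hw : C w = true) :
    degIn G (whiteDescendingEdges G C h) w = (lowerNeighborFinset G h w).card := by
  refine congrArg Finset.card (Finset.filter_congr fun b hb ↦ ?_)
  rw [mem_neighborFinset] at hb
  exact mem_whiteDescendingEdges_iff hb hw (Bool.eq_false_of_not_eq_true (hw ▸ (C.valid hb).symm))

theorem degIn_whiteDescendingEdges_of_black (hh : ∀ ⦃u v⦄, G.Adj u v → h u ≠ h v)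
    (hb : C b = false) :
    degIn G (whiteDescendingEdges G C h) b = G.degree b - (lowerNeighborFinset G h b).card := by
  have mem_iff_not_lower (w : V) (hw : w ∈ G.neighborFinset b) :
      s(b, w) ∈ whiteDescendingEdges G C h ↔ ¬ h w < h b := by
    rw [mem_neighborFinset] at hw
    have hwhite : C w = true := Bool.eq_true_of_not_eq_false (hb ▸ (C.valid hw).symm)
    rw [Sym2.eq_swap, mem_whiteDescendingEdges_iff hw.symm hwhite hb, not_lt]
    exact (hh hw).le_iff_lt.symm
  have card_add := Finset.card_filter_add_card_filter_not (s := G.neighborFinset b) (h · < h b)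
  rw [degIn, Finset.filter_congr mem_iff_not_lower, ← card_neighborFinset_eq_degree, ← card_add,
    lowerNeighborFinset, Nat.add_sub_cancel_left]

end Height

theorem stmt_4_general {V : Type*} [Fintype V] [DecidableEq V] {G : SimpleGraph V}
    [DecidableRel G.Adj] (hG : G.IsAcyclic) (C : G.Coloring Bool) :
    ∃ X : Finset (Sym2 V), ↑X ⊆ G.edgeSet ∧
      (∀ w, C w = true → 2 ≤ G.degree w → degIn G X w = 1) ∧
      (∀ b, C b = false → 2 ≤ G.degree b → degIn G X b = G.degree b - 1) := by
  obtain ⟨h, hh, card_lower⟩ := exists_height_card_lowerNeighborFinset_eq_one hG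
  refine ⟨whiteDescendingEdges G C h, whiteDescendingEdges_subset_edgeSet, ?_, ?_⟩
  · intro w hw hdeg
    rw [degIn_whiteDescendingEdges_of_white hw, card_lower w hdeg]
  · intro b hb hdeg
    rw [degIn_whiteDescendingEdges_of_black hh hb, card_lower b hdeg]

/-- For `d, δ ≥ 2`, every finite tree with a proper white/black 2-coloring admits
a set `X` of edges such that every white vertex of degree exactly `d` is incident to exactly
one edge of `X`, and every black vertex of degree exactly `δ` is incident to exactly `δ - 1`
edges of `X`. -/
theorem stmt_4 {V : Type*} [Fintype V] [DecidableEq V]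
    (G : SimpleGraph V) [DecidableRel G.Adj] (hT : G.IsTree)
    (d δ : ℕ) (hd : 2 ≤ d) (hδ : 2 ≤ δ)
    (color : V → Bool)
    (hproper : ∀ ⦃u v : V⦄, G.Adj u v → color u ≠ color v) :
    ∃ X : Finset (Sym2 V), ↑X ⊆ G.edgeSet ∧
      (∀ w : V, color w = true → G.degree w = d → degIn G X w = 1) ∧
      (∀ w : V, color w = false → G.degree w = δ → degIn G X w = δ - 1) := by
  obtain ⟨X, hX, hwhite, hblack⟩ := stmt_4_general hT.isAcyclic (Coloring.mk color @hproper)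
  exact ⟨X, hX, fun w hw hdeg ↦ hwhite w hw (hdeg ▸ hd),
    fun w hw hdeg ↦ hdeg ▸ hblack w hw (hdeg ▸ hδ)⟩
end

section
/- Let c ≥ 1 be an integer and let F be a finite forest on n ≥ 1 vertices. Let ℓ be the number of vertices of F of degree at most 1, and let p be the number of vertices v of degree exactly 2 for which there exists a set of at least c vertices of F, all of degree exactly 2 and containing v, that induces a connected subgraph of F. Then ℓ + p ≥ n/(2c). -/
/-!
Let `s` be the set of degree-`2` vertices of the forest, and let `ℓ` and `p` count the raked and the
compressed vertices. Since every isolated vertex is a component of its own, the identity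
`∑ v, deg v = 2 (n - #components)` gives `#sᶜ ≤ 2ℓ`. Deleting a vertex `v` of a forest creates at
most `deg v - 1` new components, so by the same identity deleting `sᶜ` leaves at most `#sᶜ`
components, the maximal fragments of `s`. A maximal fragment with at least `c` vertices is
compressed entirely, and every other one has at most `c - 1` vertices, so
`n ≤ #sᶜ + (p + (c - 1) * #sᶜ) = p + c * #sᶜ ≤ p + 2cℓ`.
-/

namespace RakeCompress

open Finset SimpleGraph

section Graph

variable {V : Type*} {G : SimpleGraph V}

theorem sum_sum_supp {M : Type*} [AddCommMonoid M] [Fintype V] [Fintype G.ConnectedComponent]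
    [∀ C : G.ConnectedComponent, Fintype C.supp] (f : V → M) :
    ∑ C : G.ConnectedComponent, ∑ v : C.supp, f v = ∑ v, f v := by
  let vertexEquiv : (Σ C : G.ConnectedComponent, C.supp) ≃ V :=
    Equiv.sigmaFiberEquiv G.connectedComponentMk
  rw [← Fintype.sum_sigma']
  exact vertexEquiv.sum_comp f

theorem connected_induce_image_val {s : Set V} {t : Set s}
    (ht : ((G.induce s).induce t).Connected) :
    (G.induce (Subtype.val '' t)).Connected := by
  let toImage : (G.induce s).induce t →g G.induce (Subtype.val '' t) :=
    { toFun := fun v ↦ ⟨v.1.1, Set.mem_image_of_mem _ v.2⟩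
      map_rel' := id }
  refine ht.map toImage ?_
  rintro ⟨_, v, hv, rfl⟩
  exact ⟨⟨v, hv⟩, rfl⟩

theorem ncard_isIsolated_le_card_connectedComponent [Finite V] :
    {v | G.IsIsolated v}.ncard ≤ Nat.card G.ConnectedComponent := by
  rw [← Set.ncard_univ]
  refine Set.ncard_le_ncard_of_injOn G.connectedComponentMk (fun _ _ ↦ Set.mem_univ _) ?_
  intro v hv w _ hvw
  obtain ⟨walk⟩ := ConnectedComponent.exact hvw
  cases walk with
  | nil => rfl
  | cons hadj _ => exact (hv _ hadj).elim

theorem card_edgeFinset_le_induce_add_sum_degree [Fintype V] [DecidableEq V] [DecidableRel G.Adj]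
    (s : Finset V) :
    #G.edgeFinset ≤ #(G.induce (s : Set V)).edgeFinset + ∑ v ∈ sᶜ, G.degree v := by
  have edges_covered : G.edgeFinset ⊆
      {e ∈ G.edgeFinset | e.toFinset ⊆ s} ∪ sᶜ.biUnion fun v ↦ G.incidenceFinset v := by
    intro e he
    by_cases hes : e.toFinset ⊆ s
    · exact mem_union_left _ (mem_filter.mpr ⟨he, hes⟩)
    · obtain ⟨v, hve, hvs⟩ := not_subset.mp hes
      refine mem_union_right _ (mem_biUnion.mpr ⟨v, mem_compl.mpr hvs, ?_⟩)
      exact (G.mem_incidenceFinset v e).mpr ⟨mem_edgeFinset.mp he, Sym2.mem_toFinset.mp hve⟩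
  calc #G.edgeFinset
      ≤ #{e ∈ G.edgeFinset | e.toFinset ⊆ s} + ∑ v ∈ sᶜ, #(G.incidenceFinset v) := by
        grw [← card_biUnion_le, ← card_union_le, ← edges_covered]
    _ = #(G.induce (s : Set V)).edgeFinset + ∑ v ∈ sᶜ, G.degree v := by
        simp only [card_filter_edgeFinset_toFinset_subset, card_incidenceFinset_eq_degree]

end Graph

section Forest

variable {V : Type*} [Fintype V] {F : SimpleGraph V} [DecidableRel F.Adj]

theorem sum_degree_supp_add_two (hF : F.IsAcyclic) (C : F.ConnectedComponent)
    [DecidablePred (· ∈ C.supp)] :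
    ∑ v : C.supp, F.degree v + 2 = 2 * Fintype.card C.supp := by
  classical
  have hC : (F.induce C.supp).IsTree := hF.isTree_connectedComponent C
  have degree_induce (v : C.supp) : (F.induce C.supp).degree v = F.degree v :=
    degree_induce_of_neighborSet_subset fun _ hw ↦ C.mem_supp_of_adj_mem_supp v.2 hw
  calc ∑ v : C.supp, F.degree v + 2
      = ∑ v : C.supp, (F.induce C.supp).degree v + 2 := by simp only [degree_induce]
    _ = 2 * (#(F.induce C.supp).edgeFinset + 1) := by
        rw [sum_degrees_eq_twice_card_edges, mul_add, mul_one]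
    _ = 2 * Fintype.card C.supp := by rw [hC.card_edgeFinset]

theorem sum_degree_add_two_mul_card_connectedComponent (hF : F.IsAcyclic) :
    ∑ v, F.degree v + 2 * Nat.card F.ConnectedComponent = 2 * Fintype.card V := by
  classical
  have : Fintype F.ConnectedComponent := Fintype.ofFinite _
  calc ∑ v, F.degree v + 2 * Nat.card F.ConnectedComponent
      = ∑ C : F.ConnectedComponent, (∑ v : C.supp, F.degree v + 2) := by
        rw [sum_add_distrib, sum_sum_supp fun v ↦ F.degree v]
        simp [mul_comm]
    _ = ∑ C : F.ConnectedComponent, ∑ v : C.supp, 2 := by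
        simp [sum_degree_supp_add_two hF, mul_comm]
    _ = ∑ v : V, 2 := sum_sum_supp fun _ ↦ 2
    _ = 2 * Fintype.card V := by simp [mul_comm]

theorem card_edgeFinset_add_card_connectedComponent (hF : F.IsAcyclic) :
    #F.edgeFinset + Nat.card F.ConnectedComponent = Fintype.card V := by
  have := sum_degree_add_two_mul_card_connectedComponent hF
  rw [sum_degrees_eq_twice_card_edges] at this
  lia

theorem card_degree_ne_two_le (hF : F.IsAcyclic) :
    #{v | F.degree v ≠ 2} ≤ 2 * #{v | F.degree v ≤ 1} := by
  have sum_degree := sum_degree_add_two_mul_card_connectedComponent hF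
  have card_isolated : #{v | F.degree v = 0} ≤ Nat.card F.ConnectedComponent := by
    rw [← Set.ncard_coe_finset]
    simpa only [coe_filter_univ, degree_eq_zero] using ncard_isIsolated_le_card_connectedComponent
  have pointwise (v : V) : 2 + (if F.degree v ≠ 2 then 1 else 0) ≤
      F.degree v + 2 * (if F.degree v ≤ 1 then 1 else 0) + (if F.degree v = 0 then 1 else 0) := by
    split_ifs <;> lia
  have summed := sum_le_sum fun v (_ : v ∈ univ) ↦ pointwise v
  simp only [sum_add_distrib, ← mul_sum, ← card_filter, sum_const, card_univ, smul_eq_mul]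
    at summed
  lia

variable [DecidableEq V]

theorem card_connectedComponent_induce_add_card_compl_le (hF : F.IsAcyclic) (s : Finset V) :
    Nat.card (F.induce (s : Set V)).ConnectedComponent + #sᶜ ≤
      Nat.card F.ConnectedComponent + ∑ v ∈ sᶜ, F.degree v := by
  have edges := card_edgeFinset_le_induce_add_sum_degree (G := F) s
  have euler := card_edgeFinset_add_card_connectedComponent hF
  have euler_induce := card_edgeFinset_add_card_connectedComponent (hF.induce (s : Set V))
  have card_s : Fintype.card (s : Set V) = #s := Fintype.card_coe s
  have := card_add_card_compl s
  lia

theorem card_connectedComponent_induce_le_card_compl (hF : F.IsAcyclic) {s : Finset V}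
    (hs : ∀ v ∈ s, 2 ≤ F.degree v) :
    Nat.card (F.induce (s : Set V)).ConnectedComponent ≤ #sᶜ := by
  have components := card_connectedComponent_induce_add_card_compl_le hF s
  have sum_degree := sum_degree_add_two_mul_card_connectedComponent hF
  have sum_degree_s : #s * 2 ≤ ∑ v ∈ s, F.degree v := by
    simpa using card_nsmul_le_sum s (fun v ↦ F.degree v) 2 hs
  have split_sum := sum_add_sum_compl s fun v ↦ F.degree v
  have split_card := card_add_card_compl s
  lia

end Forest

section Fragment

variable {V : Type*} (G : SimpleGraph V)

/-- The vertices lying in a large fragment of `s`: a connected set of at least `c` vertices, all of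
them in `s`. In the compress step `s` is the set of vertices of degree `2`. Fragments need not be
maximal. -/
def largeFragmentVertices (s : Finset V) (c : ℕ) : Set V :=
  {v | ∃ S : Finset V, v ∈ S ∧ c ≤ #S ∧ S ⊆ s ∧ (G.induce (S : Set V)).Connected}

variable {G} {s : Finset V} {c : ℕ}

theorem mem_largeFragmentVertices_of_le_ncard_supp
    {C : (G.induce (s : Set V)).ConnectedComponent} (hC : c ≤ C.supp.ncard) {v : (s : Set V)}
    (hv : v ∈ C.supp) : (v : V) ∈ largeFragmentVertices G s c := by
  have finite_image : (Subtype.val '' C.supp : Set V).Finite := Set.toFinite _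
  refine ⟨finite_image.toFinset, ?_, ?_, ?_, ?_⟩
  · exact finite_image.mem_toFinset.mpr (Set.mem_image_of_mem _ hv)
  · rwa [← Set.ncard_eq_toFinset_card _ finite_image,
      Set.ncard_image_of_injective _ Subtype.val_injective]
  · rw [Set.Finite.toFinset_subset]
    exact Subtype.coe_image_subset _ _
  · rw [finite_image.coe_toFinset]
    exact connected_induce_image_val C.connected_toSimpleGraph

theorem ncard_sdiff_largeFragmentVertices_le :
    ((s : Set V) \ largeFragmentVertices G s c).ncard ≤
      (c - 1) * Nat.card (G.induce (s : Set V)).ConnectedComponent := by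
  classical
  have : Fintype (G.induce (s : Set V)).ConnectedComponent := Fintype.ofFinite _
  let fragmentOf := (G.induce (s : Set V)).connectedComponentMk
  let rest : Finset (s : Set V) := {v | (v : V) ∉ largeFragmentVertices G s c}
  have card_rest : ((s : Set V) \ largeFragmentVertices G s c).ncard = #rest := by
    rw [← card_map (Function.Embedding.subtype _), ← Set.ncard_coe_finset]
    congr 1
    ext v
    simp [rest, and_comm]
  have card_fiber_le (C) : #{v ∈ rest | fragmentOf v = C} ≤ c - 1 := by
    obtain fiber_empty | ⟨v, hv⟩ := {v ∈ rest | fragmentOf v = C}.eq_empty_or_nonempty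
    · simp [fiber_empty]
    obtain ⟨hv_rest, hvC⟩ := mem_filter.mp hv
    have card_supp_lt : C.supp.ncard < c := by
      by_contra! hC
      exact (mem_filter.mp hv_rest).2 (mem_largeFragmentVertices_of_le_ncard_supp hC hvC)
    have card_fiber_le_supp : #{v ∈ rest | fragmentOf v = C} ≤ C.supp.ncard := by
      rw [← Set.ncard_coe_finset]
      exact Set.ncard_le_ncard fun w hw ↦ (mem_filter.mp hw).2
    lia
  rw [card_rest, Nat.card_eq_fintype_card, ← card_univ]
  exact card_le_mul_card_image_of_maps_to (fun v _ ↦ mem_univ (fragmentOf v)) _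
    fun C _ ↦ card_fiber_le C

end Fragment

theorem card_le_ncard_largeFragmentVertices_add {V : Type*} [Fintype V] {F : SimpleGraph V}
    [DecidableRel F.Adj] (hF : F.IsAcyclic) {c : ℕ} (hc : 1 ≤ c) :
    Fintype.card V ≤ (largeFragmentVertices F {v | F.degree v = 2} c).ncard +
      2 * c * #{v | F.degree v ≤ 1} := by
  classical
  let s : Finset V := {v | F.degree v = 2}
  have card_compl : #sᶜ ≤ 2 * #{v | F.degree v ≤ 1} := by
    simpa only [s, compl_filter] using card_degree_ne_two_le hF
  have card_fragments : Nat.card (F.induce (s : Set V)).ConnectedComponent ≤ #sᶜ :=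
    card_connectedComponent_induce_le_card_compl hF fun v hv ↦ (mem_filter.mp hv).2.ge
  have card_s : #s ≤ (largeFragmentVertices F s c).ncard + (c - 1) * #sᶜ := by
    rw [← Set.ncard_coe_finset]
    grw [← card_fragments, ← ncard_sdiff_largeFragmentVertices_le, add_comm]
    exact Set.ncard_le_ncard_sdiff_add_ncard _ _
  calc Fintype.card V
      = #s + #sᶜ := (card_add_card_compl s).symm
    _ ≤ (largeFragmentVertices F s c).ncard + (c - 1) * #sᶜ + #sᶜ := by grw [card_s]
    _ = (largeFragmentVertices F s c).ncard + c * #sᶜ := by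
        rw [add_assoc, ← Nat.succ_mul, Nat.succ_eq_add_one, Nat.sub_add_cancel hc]
    _ ≤ (largeFragmentVertices F s c).ncard + 2 * c * #{v | F.degree v ≤ 1} := by
        grw [card_compl]
        exact le_of_eq (by ring)

end RakeCompress

/-- Rake-and-compress counting. In a finite forest `F` on `n ≥ 1` vertices, if
`ℓ` is the number of vertices of degree at most `1` and `p` is the number of degree-`2`
vertices lying in a connected path fragment of at least `c` degree-`2` vertices, then
`ℓ + p ≥ n / (2c)`. -/
theorem stmt_5 {V : Type*} [Fintype V] [DecidableEq V]
    (F : SimpleGraph V) [DecidableRel F.Adj] (hF : F.IsAcyclic)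
    (c : ℕ) (hc : 1 ≤ c) (hn : 1 ≤ Fintype.card V) :
    (Fintype.card V : ℝ) / (2 * c) ≤
      ({v : V | F.degree v ≤ 1}.ncard : ℝ) +
      ({v : V | F.degree v = 2 ∧ ∃ S : Finset V, v ∈ S ∧ c ≤ S.card ∧
          (∀ u ∈ S, F.degree u = 2) ∧ (F.induce (↑S : Set V)).Connected}.ncard : ℝ) := by
  have fragments_eq : {v : V | F.degree v = 2 ∧ ∃ S : Finset V, v ∈ S ∧ c ≤ S.card ∧
      (∀ u ∈ S, F.degree u = 2) ∧ (F.induce (↑S : Set V)).Connected} =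
      RakeCompress.largeFragmentVertices F {v | F.degree v = 2} c := by
    ext v
    simp only [RakeCompress.largeFragmentVertices, Finset.subset_iff, Finset.mem_filter_univ,
      Set.mem_ofPred_eq, and_iff_right_iff_imp]
    rintro ⟨S, hv, -, hS, -⟩
    exact hS v hv
  have card_low : {v | F.degree v ≤ 1}.ncard = ({v | F.degree v ≤ 1} : Finset V).card := by
    rw [← Set.ncard_coe_finset, Finset.coe_filter_univ]
  have card_le := RakeCompress.card_le_ncard_largeFragmentVertices_add hF hc
  rw [fragments_eq, card_low, div_le_iff₀ (by positivity)]
  norm_cast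
  nlinarith
end

section
/- Let d, δ ≥ 2 and let Π = (d, δ, W, B) be a binary labeling problem that is (1,2)-resilient or (2,1)-resilient. Then every finite tree with a proper white/black 2-coloring of its vertices admits a solution to Π. -/
/-- The binary labeling problem `(d, δ, W, B)` is `(t, s)`-resilient:
`W ∩ {i, …, i + (d - t)} ≠ ∅` for every `0 ≤ i ≤ t`, and
`B ∩ {i, …, i + (δ - s)} ≠ ∅` for every `0 ≤ i ≤ s`. -/
def Resilient (d δ t s : ℕ) (W B : Set ℕ) : Prop :=
  (∀ i ≤ t, ∃ j ∈ W, i ≤ j ∧ j ≤ i + (d - t)) ∧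
  (∀ i ≤ s, ∃ j ∈ B, i ≤ j ∧ j ≤ i + (δ - s))

/-!
On a forest a solution exists as soon as every vertex of degree `n` can cope with one incident edge
whose label is imposed from outside, that is, as soon as its set of admissible counts meets
`{0, …, n - 1}` and `{1, …, n}`; this is `(1,1)`-resilience. Prune a leaf `v` hanging from `u`: both
labels of the edge `uv` suit `v`, and letting this edge make up for a missing unit at `u` leaves `u`
with admissible counts that have the same property for its new degree. After solving the pruned
forest, select `uv` exactly if `u` needs it.
-/

section OneResilience

/-- `S`, read as the set of admissible numbers of selected edges at a vertex of degree `n`, copes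
with one incident edge that is labelled beforehand. This is the condition of `Resilient` for one
side with parameter `1`, except that for `n = 0` it is only required for `i = 0`, where it says
`0 ∈ S`. -/
def OneResilient (n : ℕ) (S : Set ℕ) : Prop :=
  ∀ i ≤ min 1 n, ∃ j ∈ S, i ≤ j ∧ j ≤ i + (n - 1)

/-- The counts that become members of `S` after adding at most one: what remains admissible at a
vertex when one of its edges is set aside to be labelled last. -/
def reachableByOne (S : Set ℕ) : Set ℕ := {j | j ∈ S ∨ j + 1 ∈ S}

variable {n : ℕ} {S : Set ℕ}

theorem oneResilient_univ : OneResilient n Set.univ :=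
  fun i _ => ⟨i, Set.mem_univ i, le_rfl, Nat.le_add_right i _⟩

theorem OneResilient.zero_mem (h : OneResilient 0 S) : 0 ∈ S := by
  obtain ⟨j, hj, -, hj0⟩ := h 0 (Nat.zero_le _)
  rwa [Nat.le_zero.mp hj0] at hj

theorem OneResilient.mem_of_le_one (h : OneResilient 1 S) {i : ℕ} (hi : i ≤ 1) : i ∈ S := by
  obtain ⟨j, hj, hij, hji⟩ := h i hi
  rwa [le_antisymm hij hji]

theorem OneResilient.reachableByOne (h : OneResilient (n + 1) S) :
    OneResilient n (reachableByOne S) := by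
  intro i hi
  obtain ⟨j, hj, hij, hji⟩ := h i (by omega)
  by_cases hsmall : j ≤ i + (n - 1)
  · exact ⟨j, Or.inl hj, hij, hsmall⟩
  · refine ⟨j - 1, Or.inr ?_, by omega, by omega⟩
    rwa [Nat.sub_add_cancel (by omega)]

theorem oneResilient_of_forall_exists_mem {t : ℕ} (ht : 1 ≤ t) (htn : t ≤ n)
    (h : ∀ i ≤ t, ∃ j ∈ S, i ≤ j ∧ j ≤ i + (n - t)) : OneResilient n S := by
  intro i hi
  obtain ⟨j, hj, hij, hji⟩ := h i (by omega)
  exact ⟨j, hj, hij, by omega⟩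

end OneResilience

theorem exists_degree_eq_one_of_isAcyclic {V : Type*} {G : SimpleGraph V} [Finite G.edgeSet]
    [G.LocallyFinite] (hG : G.IsAcyclic) (hne : G ≠ ⊥) : ∃ v, G.degree v = 1 := by
  obtain ⟨a, b, hab⟩ := G.ne_bot_iff_exists_adj.mp hne
  have : Nonempty V := ⟨a⟩
  obtain ⟨x, v, p, hp, hmax⟩ := SimpleGraph.Walk.exists_isPath_forall_isPath_length_le_length G
  have hnil : ¬ p.Nil := by
    have hlen := hmax a b hab.toWalk (SimpleGraph.Walk.IsPath.of_adj hab)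
    rw [SimpleGraph.Walk.not_nil_iff_lt_length]
    exact Nat.lt_of_lt_of_le (by simp) hlen
  refine ⟨v, SimpleGraph.degree_eq_one_iff_existsUnique_adj.mpr
    ⟨p.penultimate, (p.adj_penultimate hnil).symm, fun w hw => ?_⟩⟩
  have hmem : w ∈ p.support := by
    by_contra hw'
    have hlen := hmax x w (p.concat hw) (hp.concat hw' hw)
    simp at hlen
  exact hG.eq_penultimate_of_adj_end hp hw hmem

section DegIn

variable {V : Type*} [Fintype V] [DecidableEq V] {G H : SimpleGraph V} [DecidableRel G.Adj]
  [DecidableRel H.Adj] {X : Finset (Sym2 V)} {u v : V}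

theorem degIn_le_degree : degIn G X v ≤ G.degree v :=
  Finset.card_le_card (Finset.filter_subset _ _)

theorem degIn_edgeFinset : degIn G G.edgeFinset v = G.degree v := by
  rw [degIn, ← SimpleGraph.card_neighborFinset_eq_degree, Finset.filter_true_of_mem]
  simp

theorem degIn_congr_of_le (hle : H ≤ G) (hX : ↑X ⊆ H.edgeSet) : degIn H X v = degIn G X v := by
  unfold degIn
  congr 1
  ext w
  simp only [Finset.mem_filter, SimpleGraph.mem_neighborFinset]
  exact ⟨fun h => ⟨hle h.1, h.2⟩, fun h => ⟨hX h.2, h.2⟩⟩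

theorem degIn_insert_of_notMem {e : Sym2 V} (hv : v ∉ e) :
    degIn G (insert e X) v = degIn G X v := by
  unfold degIn
  congr 1
  refine Finset.filter_congr fun w _ => ?_
  have hne : s(v, w) ≠ e := fun h => hv (h ▸ Sym2.mem_mk_left v w)
  simp only [Finset.mem_insert, hne, false_or]

theorem degIn_insert_of_adj (huv : G.Adj u v) (hX : s(u, v) ∉ X) :
    degIn G (insert s(u, v) X) u = degIn G X u + 1 := by
  unfold degIn
  rw [← Finset.card_insert_of_notMem (a := v) (by simp [hX])]
  congr 1
  ext w
  simp only [Finset.mem_filter, SimpleGraph.mem_neighborFinset, Finset.mem_insert,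
    Sym2.congr_right]
  constructor
  · rintro ⟨hw, rfl | hwX⟩
    exacts [Or.inl rfl, Or.inr ⟨hw, hwX⟩]
  · rintro (rfl | ⟨hw, hwX⟩)
    exacts [⟨huv, Or.inl rfl⟩, ⟨hw, Or.inr hwX⟩]

end DegIn

section DeleteEdges

variable {V : Type*} [Fintype V] {G : SimpleGraph V} [DecidableRel G.Adj] {u v x : V}

theorem degree_deleteEdges_singleton_of_notMem {e : Sym2 V}
    [DecidableRel (G.deleteEdges {e}).Adj] (hx : x ∉ e) :
    (G.deleteEdges {e}).degree x = G.degree x := by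
  rw [← SimpleGraph.card_neighborFinset_eq_degree, ← SimpleGraph.card_neighborFinset_eq_degree]
  congr 1
  ext w
  have hne : s(x, w) ≠ e := fun h => hx (h ▸ Sym2.mem_mk_left x w)
  simp [hne]

theorem degree_deleteEdges_singleton_add_one [DecidableRel (G.deleteEdges {s(u, v)}).Adj]
    (huv : G.Adj u v) : (G.deleteEdges {s(u, v)}).degree u + 1 = G.degree u := by
  classical
  have hinsert : G.edgeFinset = insert s(u, v) (G.deleteEdges {s(u, v)}).edgeFinset := by
    ext e
    by_cases he : e = s(u, v) <;> simp [he, huv]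
  rw [← degIn_edgeFinset, ← degIn_edgeFinset, hinsert, degIn_insert_of_adj huv (by simp),
    degIn_congr_of_le (G.deleteEdges_le _) (by simp)]

end DeleteEdges

section GeneralFactor

variable {V : Type*} [Fintype V] [DecidableEq V] {G : SimpleGraph V} [hdec : DecidableRel G.Adj]
  {S : V → Set ℕ} {X : Finset (Sym2 V)} {u v : V}

/-- `X` is a general factor of `G` in the sense of Lovász: a set of edges whose degree at each
vertex `v` lies in the prescribed set `S v`. -/
def IsGeneralFactor (G : SimpleGraph V) [DecidableRel G.Adj] (S : V → Set ℕ)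
    (X : Finset (Sym2 V)) : Prop :=
  ↑X ⊆ G.edgeSet ∧ ∀ v, degIn G X v ∈ S v

theorem isGeneralFactor_empty (h : ∀ v, 0 ∈ S v) : IsGeneralFactor G S ∅ :=
  ⟨by simp, fun v => by simpa [degIn] using h v⟩

/-- The degree constraints imposed on the graph left after pruning the edge from `u` to the leaf
`v`: the edge may still be added at `u`, and `v` no longer matters. -/
def prunedConstraint (S : V → Set ℕ) (u v : V) : V → Set ℕ :=
  Function.update (Function.update S v Set.univ) u (reachableByOne (S u))

theorem exists_isGeneralFactor_of_deleteEdges [DecidableRel (G.deleteEdges {s(u, v)}).Adj]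
    (huv : G.Adj u v) (hv : ∀ n ≤ G.degree v, n ∈ S v)
    (hX : IsGeneralFactor (G.deleteEdges {s(u, v)}) (prunedConstraint S u v) X) :
    ∃ Y, IsGeneralFactor G S Y := by
  obtain ⟨hXsub, hXdeg⟩ := hX
  have hle : G.deleteEdges {s(u, v)} ≤ G := G.deleteEdges_le _
  have hXG : ↑X ⊆ G.edgeSet := hXsub.trans (SimpleGraph.edgeSet_mono hle)
  have huvX : s(u, v) ∉ X := fun h => by simpa using hXsub h
  simp only [degIn_congr_of_le hle hXsub] at hXdeg
  have hother : ∀ x, x ≠ u → x ≠ v → degIn G X x ∈ S x := fun x hxu hxv => by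
    simpa [prunedConstraint, hxu, hxv] using hXdeg x
  have hu : degIn G X u ∈ reachableByOne (S u) := by simpa [prunedConstraint] using hXdeg u
  have hextend : ∀ Y : Finset (Sym2 V), ↑Y ⊆ G.edgeSet → degIn G Y u ∈ S u →
      (∀ x, x ≠ u → x ≠ v → degIn G Y x = degIn G X x) → IsGeneralFactor G S Y := by
    refine fun Y hY hYu hYX => ⟨hY, fun x => ?_⟩
    by_cases hxv : x = v
    · exact hxv ▸ hv _ degIn_le_degree
    by_cases hxu : x = u
    · exact hxu ▸ hYu
    · exact hYX x hxu hxv ▸ hother x hxu hxv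
  rcases hu with hu | hu
  · exact ⟨X, hextend X hXG hu fun _ _ _ => rfl⟩
  · refine ⟨insert s(u, v) X, hextend _ ?_ ?_ fun x hxu hxv => ?_⟩
    · rw [Finset.coe_insert]
      exact Set.insert_subset huv hXG
    · rwa [degIn_insert_of_adj huv huvX]
    · exact degIn_insert_of_notMem (by simp [hxu, hxv])

theorem oneResilient_prunedConstraint [DecidableRel (G.deleteEdges {s(u, v)}).Adj]
    (huv : G.Adj u v) (hS : ∀ x, OneResilient (G.degree x) (S x)) (x : V) :
    OneResilient ((G.deleteEdges {s(u, v)}).degree x) (prunedConstraint S u v x) := by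
  by_cases hxu : x = u
  · subst hxu
    rw [prunedConstraint, Function.update_self]
    exact OneResilient.reachableByOne (degree_deleteEdges_singleton_add_one huv ▸ hS x)
  rw [prunedConstraint, Function.update_of_ne hxu]
  by_cases hxv : x = v
  · rw [hxv, Function.update_self]
    exact oneResilient_univ
  · rw [Function.update_of_ne hxv, degree_deleteEdges_singleton_of_notMem (by simp [hxu, hxv])]
    exact hS x

theorem exists_isGeneralFactor_of_isAcyclic (hG : G.IsAcyclic)
    (hS : ∀ v, OneResilient (G.degree v) (S v)) : ∃ X, IsGeneralFactor G S X := by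
  induction G using WellFoundedLT.induction generalizing S hdec with
  | ind G ih =>
  by_cases hbot : G = ⊥
  · subst hbot
    exact ⟨∅, isGeneralFactor_empty fun v => (by simpa using hS v : OneResilient 0 (S v)).zero_mem⟩
  obtain ⟨v, hv⟩ := exists_degree_eq_one_of_isAcyclic hG hbot
  obtain ⟨u, hvu, -⟩ := SimpleGraph.degree_eq_one_iff_existsUnique_adj.mp hv
  have huv : G.Adj u v := hvu.symm
  have hvS : ∀ n ≤ G.degree v, n ∈ S v := fun n hn =>
    OneResilient.mem_of_le_one (hv ▸ hS v) (hv ▸ hn)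
  classical
  have hlt : G.deleteEdges {s(u, v)} < G :=
    (G.deleteEdges_le _).lt_of_ne fun h => by simp [huv] at h
  obtain ⟨X, hX⟩ := ih _ hlt (hG.anti hlt.le) (oneResilient_prunedConstraint huv hS)
  exact exists_isGeneralFactor_of_deleteEdges huv hvS hX

end GeneralFactor

theorem stmt_7_general {V : Type*} [Fintype V] [DecidableEq V]
    (G : SimpleGraph V) [DecidableRel G.Adj] (hG : G.IsAcyclic)
    {d δ t s : ℕ} (ht : 1 ≤ t) (htd : t ≤ d) (hs : 1 ≤ s) (hsδ : s ≤ δ)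
    {W B : Set ℕ} (hres : Resilient d δ t s W B) (color : V → Bool) :
    ∃ X : Finset (Sym2 V), ↑X ⊆ G.edgeSet ∧
      (∀ w : V, color w = true → G.degree w = d → degIn G X w ∈ W) ∧
      (∀ w : V, color w = false → G.degree w = δ → degIn G X w ∈ B) := by
  have hW : OneResilient d W := oneResilient_of_forall_exists_mem ht htd hres.1
  have hB : OneResilient δ B := oneResilient_of_forall_exists_mem hs hsδ hres.2
  let admissible (v : V) : Set ℕ :=
    {j | (color v = true → G.degree v = d → j ∈ W) ∧ (color v = false → G.degree v = δ → j ∈ B)}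
  have hadm (v : V) : OneResilient (G.degree v) (admissible v) := by
    by_cases hw : color v = true ∧ G.degree v = d
    · simpa [admissible, hw] using hW
    by_cases hb : color v = false ∧ G.degree v = δ
    · simpa [admissible, hb] using hB
    · have huniv : admissible v = Set.univ := by
        ext j
        simp_all [admissible]
      exact huniv ▸ oneResilient_univ
  obtain ⟨X, hX, hdeg⟩ := exists_isGeneralFactor_of_isAcyclic hG hadm
  exact ⟨X, hX, fun w => (hdeg w).1, fun w => (hdeg w).2⟩

/-- A `(1,2)`-resilient or `(2,1)`-resilient binary labeling problem admits a
solution on every finite tree with a proper white/black 2-coloring. -/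
theorem stmt_7 {V : Type*} [Fintype V] [DecidableEq V]
    (G : SimpleGraph V) [DecidableRel G.Adj] (hT : G.IsTree)
    (d δ : ℕ) (hd : 2 ≤ d) (hδ : 2 ≤ δ)
    (W B : Set ℕ) (hWd : ∀ x ∈ W, x ≤ d) (hBδ : ∀ x ∈ B, x ≤ δ)
    (hres : Resilient d δ 1 2 W B ∨ Resilient d δ 2 1 W B)
    (color : V → Bool)
    (hproper : ∀ ⦃u v : V⦄, G.Adj u v → color u ≠ color v) :
    ∃ X : Finset (Sym2 V), ↑X ⊆ G.edgeSet ∧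
      (∀ w : V, color w = true → G.degree w = d → degIn G X w ∈ W) ∧
      (∀ w : V, color w = false → G.degree w = δ → degIn G X w ∈ B) := by
  rcases hres with h | h
  · exact stmt_7_general G hT.isAcyclic le_rfl (by omega) (by omega) hδ h color
  · exact stmt_7_general G hT.isAcyclic (by omega) hd le_rfl (by omega) h color
end

section
/- Let d ≥ 3 and δ ≥ 3 be integers. Every finite tree with a proper white/black 2-coloring of its vertices admits a set X of edges such that every white vertex of degree exactly d is incident to exactly one edge of X and every black vertex of degree exactly δ is incident to exactly one edge of X. -/
/-!
Root every component of the forest and let each vertex `v` with at least two neighbours choose a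
child `c v`; this is possible because `v` has at most one parent. The edges `v — c v` form disjoint
descending paths, since a vertex is chosen only by its own parent. Going down each path from its top
and taking every other edge, starting with the first, gives a matching that covers every vertex that
makes a choice.
-/

theorem exists_kernel_of_wellFounded {α : Type*} {r : α → α → Prop} (hr : WellFounded r) :
    ∃ K : Set α, ∀ a, a ∈ K ↔ ∀ b ∈ K, ¬ r b a := by
  let inKernel : α → Prop := hr.fix fun a inKernel ↦ ∀ b, ∀ hba : r b a, ¬ inKernel b hba
  have inKernel_iff (a : α) : inKernel a ↔ ∀ b, r b a → ¬ inKernel b := by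
    rw [← eq_iff_iff]
    exact hr.fix_eq _ a
  exact ⟨{a | inKernel a}, fun a ↦ (inKernel_iff a).trans (forall_congr' fun _ ↦ imp_not_comm)⟩

section Matching

open SimpleGraph

variable {V : Type*} {G : SimpleGraph V}

theorem exists_isMatching_of_injOn_of_wellFounded {S : Set V} {c : V → V} (hinj : S.InjOn c)
    (hadj : ∀ v ∈ S, G.Adj v (c v)) (hwf : WellFounded fun u v ↦ u ∈ S ∧ c u = v) :
    ∃ M : G.Subgraph, M.IsMatching ∧ S ⊆ M.verts := by
  obtain ⟨K, hK⟩ := exists_kernel_of_wellFounded hwf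
  have hdisj : Disjoint (S ∩ K) (c '' (S ∩ K)) := by
    refine Set.disjoint_left.mpr ?_
    rintro _ ⟨-, hcuK⟩ ⟨u, ⟨huS, huK⟩, rfl⟩
    exact (hK _).mp hcuK u huK ⟨huS, rfl⟩
  have hcover : S ⊆ S ∩ K ∪ c '' (S ∩ K) := by
    intro v hvS
    by_cases hvK : v ∈ K
    · exact .inl ⟨hvS, hvK⟩
    · rw [hK] at hvK
      push Not at hvK
      obtain ⟨u, huK, huS, rfl⟩ := hvK
      exact .inr ⟨u, ⟨huS, huK⟩, rfl⟩
  obtain ⟨M, hverts, hM⟩ := Subgraph.IsMatching.exists_of_disjoint_sets_of_equiv hdisj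
    (Equiv.Set.imageOfInjOn c _ (hinj.mono Set.inter_subset_left)) fun v ↦ hadj v v.2.1
  exact ⟨M, hM, hverts ▸ hcover⟩

theorem subsingleton_adj_dist_le_of_isAcyclic (hG : G.IsAcyclic) {r v : V}
    (hrv : G.Reachable r v) : {u | G.Adj v u ∧ G.dist r u ≤ G.dist r v}.Subsingleton := by
  obtain ⟨p, hp, hp_length⟩ := hrv.exists_path_of_dist
  suffices h : ∀ u, G.Adj v u → G.dist r u ≤ G.dist r v → u = p.penultimate from
    fun u hu w hw ↦ (h u hu.1 hu.2).trans (h w hw.1 hw.2).symm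
  intro u hvu hle
  refine hG.eq_penultimate_of_adj_end hp hvu ?_
  by_contra hu
  obtain ⟨q, hq, hq_length⟩ := (hrv.trans hvu.reachable).exists_path_of_dist
  have hv : v ∈ q.support := hG.mem_support_of_ne_mem_support_of_adj_of_isPath hq hp hvu.symm hu
  have hlength : q.length = p.length + 1 := by
    rw [hG.path_concat hp hq hvu hv, Walk.length_concat]
  omega

/-- A depth function of a rooted forest, encoded without naming the roots: every vertex has at most
one neighbour, its parent, that is not strictly deeper than itself. -/
def IsDepth (G : SimpleGraph V) (depth : V → ℕ) : Prop :=
  ∀ v, {u | G.Adj v u ∧ depth u ≤ depth v}.Subsingleton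

theorem exists_isDepth_of_isAcyclic (hG : G.IsAcyclic) : ∃ depth, IsDepth G depth := by
  let root (v : V) : V := (G.connectedComponentMk v).out
  have hroot (v : V) : G.Reachable (root v) v := ConnectedComponent.exact (Quot.out_eq _)
  refine ⟨fun v ↦ G.dist (root v) v, fun v ↦ ?_⟩
  refine (subsingleton_adj_dist_le_of_isAcyclic hG (hroot v)).anti ?_
  rintro u ⟨hvu, hle⟩
  have hroot_eq : root u = root v :=
    congrArg Quot.out (ConnectedComponent.sound hvu.symm.reachable)
  exact ⟨hvu, by simpa only [hroot_eq] using hle⟩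

namespace IsDepth

variable {depth : V → ℕ}

theorem exists_adj_lt (hdepth : IsDepth G depth) {v : V} (hv : (G.neighborSet v).Nontrivial) :
    ∃ u, G.Adj v u ∧ depth v < depth u := by
  by_contra! hle
  obtain ⟨a, ha, b, hb, hab⟩ := hv
  exact hab (hdepth v ⟨ha, hle a ha⟩ ⟨hb, hle b hb⟩)

theorem exists_isMatching (hdepth : IsDepth G depth) :
    ∃ M : G.Subgraph, M.IsMatching ∧ ∀ v, (G.neighborSet v).Nontrivial → v ∈ M.verts := by
  have hchild (v : V) : ∃ u, (G.neighborSet v).Nontrivial → G.Adj v u ∧ depth v < depth u := by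
    by_cases hv : (G.neighborSet v).Nontrivial
    · exact (hdepth.exists_adj_lt hv).imp fun _ hu _ ↦ hu
    · exact ⟨v, fun hv' ↦ absurd hv' hv⟩
  choose c hadj hlt using hchild
  have hinj : {v | (G.neighborSet v).Nontrivial}.InjOn c := by
    intro u hu w hw huw
    refine hdepth (c u) ⟨(hadj u hu).symm, (hlt u hu).le⟩ ?_
    rw [huw]
    exact ⟨(hadj w hw).symm, (hlt w hw).le⟩
  refine exists_isMatching_of_injOn_of_wellFounded hinj hadj ?_
  refine Subrelation.wf ?_ (measure depth).wf
  rintro u _ ⟨hu, rfl⟩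
  exact hlt u hu

end IsDepth

theorem stmt_8_general (hG : G.IsAcyclic) :
    ∃ M : G.Subgraph, M.IsMatching ∧ ∀ v, (G.neighborSet v).Nontrivial → v ∈ M.verts :=
  have ⟨_, hdepth⟩ := exists_isDepth_of_isAcyclic hG
  hdepth.exists_isMatching

section Finite

variable [Fintype V] [DecidableEq V] [DecidableRel G.Adj]

theorem degIn_toFinset_edgeSet (M : G.Subgraph) [Fintype M.edgeSet] (v : V)
    [Fintype (M.neighborSet v)] : degIn G M.edgeSet.toFinset v = M.degree v := by
  rw [degIn, ← Subgraph.finset_card_neighborSet_eq_degree]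
  congr 1
  ext u
  simpa using M.adj_sub

theorem exists_degIn_eq_one_of_isAcyclic (hG : G.IsAcyclic) :
    ∃ X : Finset (Sym2 V), ↑X ⊆ G.edgeSet ∧ ∀ v, 2 ≤ G.degree v → degIn G X v = 1 := by
  classical
  obtain ⟨M, hM, hcover⟩ := stmt_8_general hG
  refine ⟨M.edgeSet.toFinset, by simpa using M.edgeSet_subset, fun v hv ↦ ?_⟩
  have hnontrivial : (G.neighborSet v).Nontrivial := by
    rw [← coe_neighborFinset]
    exact Finset.one_lt_card_iff_nontrivial.mp hv
  rw [degIn_toFinset_edgeSet]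
  exact Subgraph.isMatching_iff_forall_degree.mp hM v (hcover v hnontrivial)

end Finite

end Matching

/-- For `d, δ ≥ 3`, every finite tree with a proper white/black 2-coloring admits
a set `X` of edges such that every white vertex of degree exactly `d` and every black vertex
of degree exactly `δ` is incident to exactly one edge of `X` (hypergraph matching). -/
theorem stmt_8 {V : Type*} [Fintype V] [DecidableEq V]
    (G : SimpleGraph V) [DecidableRel G.Adj] (hT : G.IsTree)
    (d δ : ℕ) (hd : 3 ≤ d) (hδ : 3 ≤ δ)
    (color : V → Bool)
    (hproper : ∀ ⦃u v : V⦄, G.Adj u v → color u ≠ color v) :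
    ∃ X : Finset (Sym2 V), ↑X ⊆ G.edgeSet ∧
      (∀ w : V, color w = true → G.degree w = d → degIn G X w = 1) ∧
      (∀ w : V, color w = false → G.degree w = δ → degIn G X w = 1) := by
  obtain ⟨X, hX, hdeg⟩ := exists_degIn_eq_one_of_isAcyclic hT.isAcyclic
  exact ⟨X, hX, fun w _ hw ↦ hdeg w (by omega), fun w _ hw ↦ hdeg w (by omega)⟩
end

section
/- Let d ≥ 3 and δ ≥ 2 be integers. Every finite tree with a proper white/black 2-coloring of its vertices admits a set X of edges such that every white vertex of degree exactly d is incident to exactly one edge of X and every black vertex of degree exactly δ is incident to either 0 or δ edges of X. -/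
/-!
Root every component of the forest. Going away from the roots, decide for each vertex whether it
is selected: a vertex is selected iff it is the distinguished child of its parent and its
grandparent is not selected. A vertex that has a child then has exactly one selected neighbour: its
parent if that is selected, and its distinguished child otherwise. The edges at the selected
black vertices form the required set: a white vertex of degree at least two is incident to exactly
one of them, and a black vertex to all or none of its edges.
-/

section DegIn

variable {V : Type*} [Fintype V] [DecidableEq V] {G : SimpleGraph V}
    [DecidableRel G.Adj] {X : Finset (Sym2 V)} {v : V}

lemma degIn_eq_one_iff : degIn G X v = 1 ↔ ∃! u, G.Adj v u ∧ s(v, u) ∈ X := by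
  simp only [degIn, Finset.card_eq_one, Finset.singleton_iff_unique_mem, Finset.mem_filter,
    SimpleGraph.mem_neighborFinset]

lemma degIn_eq_zero_iff : degIn G X v = 0 ↔ ∀ u, G.Adj v u → s(v, u) ∉ X := by
  simp only [degIn, Finset.card_eq_zero, Finset.filter_eq_empty_iff,
    SimpleGraph.mem_neighborFinset]

lemma degIn_eq_degree_iff : degIn G X v = G.degree v ↔ ∀ u, G.Adj v u → s(v, u) ∈ X := by
  simp only [degIn, ← SimpleGraph.card_neighborFinset_eq_degree, Finset.card_filter_eq_iff,
    SimpleGraph.mem_neighborFinset]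

end DegIn

lemma nontrivial_neighborSet_iff_one_lt_degree {V : Type*} {G : SimpleGraph V} {v : V}
    [Fintype (G.neighborSet v)] : (G.neighborSet v).Nontrivial ↔ 1 < G.degree v := by
  rw [← SimpleGraph.card_neighborFinset_eq_degree, Finset.one_lt_card_iff_nontrivial,
    Finset.Nontrivial, SimpleGraph.coe_neighborFinset]

lemma exists_set_mem_iff_of_wellFounded {α : Type*} {r : α → α → Prop} (hr : WellFounded r)
    (p : α → Prop) : ∃ S : Set α, ∀ a, a ∈ S ↔ p a ∧ ∀ b, r b a → b ∉ S :=
  ⟨{a | hr.fix (fun a mem ↦ p a ∧ ∀ b, ∀ hb : r b a, ¬ mem b hb) a}, fun a ↦ by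
    rw [Set.mem_ofPred_eq, hr.fix_eq]; rfl⟩

lemma wellFounded_comp_self {α : Type*} {r : α → α → Prop} (hr : WellFounded r) :
    WellFounded (Relation.Comp r r) :=
  Subrelation.wf (fun ⟨_, hab, hbc⟩ ↦ .tail (.single hab) hbc) hr.transGen

/-- `r` orients the edges of `G` from parent to child in a rooted forest: `r u v` says that `u` is
the parent of `v`. Well-foundedness makes the iterated parents of any vertex end in a root. -/
structure IsParentRel {V : Type*} (G : SimpleGraph V) (r : V → V → Prop) : Prop where
  adj_iff : ∀ {u v}, G.Adj u v ↔ r u v ∨ r v u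
  leftUnique : Relator.LeftUnique r
  wellFounded : WellFounded r

namespace IsParentRel

variable {V : Type*} {G : SimpleGraph V} {r : V → V → Prop}

lemma exists_child (h : IsParentRel G r) {w : V} (hw : (G.neighborSet w).Nontrivial) :
    ∃ v, r w v := by
  obtain ⟨u, hu, v, hv, huv⟩ := hw
  rcases h.adj_iff.1 hu with hwu | huw
  · exact ⟨u, hwu⟩
  rcases h.adj_iff.1 hv with hwv | hvw
  · exact ⟨v, hwv⟩
  · exact absurd (h.leftUnique huw hvw) huv

lemma exists_set_child_mem_iff (h : IsParentRel G r) (child : V → V) :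
    ∃ S : Set V, ∀ {w v}, r w v → (v ∈ S ↔ v = child w ∧ ∀ u, r u w → u ∉ S) := by
  obtain ⟨S, hS⟩ := exists_set_mem_iff_of_wellFounded (wellFounded_comp_self h.wellFounded)
    fun v ↦ ∃ w, r w v ∧ v = child w
  refine ⟨S, fun {w v} hwv ↦ ?_⟩
  have parent_eq {w'} (hw'v : r w' v) : w' = w := h.leftUnique hw'v hwv
  rw [hS v]
  constructor
  · rintro ⟨⟨w', hw'v, hv⟩, hgrand⟩
    exact ⟨parent_eq hw'v ▸ hv, fun u huw ↦ hgrand u ⟨w, huw, hwv⟩⟩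
  · rintro ⟨hv, hparent⟩
    exact ⟨⟨w, hwv, hv⟩, fun u ⟨w', huw', hw'v⟩ ↦ hparent u (parent_eq hw'v ▸ huw')⟩

theorem exists_set_existsUnique_adj_mem (h : IsParentRel G r) :
    ∃ S : Set V, ∀ w, (∃ v, r w v) → ∃! v, G.Adj w v ∧ v ∈ S := by
  choose! child hchild using fun w (hw : ∃ v, r w v) ↦ hw
  obtain ⟨S, hS⟩ := h.exists_set_child_mem_iff child
  refine ⟨S, fun w hw ↦ ?_⟩
  by_cases hparent : ∃ u, r u w ∧ u ∈ S
  · obtain ⟨u, huw, hu⟩ := hparent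
    refine ⟨u, ⟨h.adj_iff.2 (.inr huw), hu⟩, fun v ⟨hwv, hv⟩ ↦ ?_⟩
    rcases h.adj_iff.1 hwv with hwv | hvw
    · exact absurd hu (((hS hwv).1 hv).2 u huw)
    · exact h.leftUnique hvw huw
  · push Not at hparent
    refine ⟨child w, ⟨h.adj_iff.2 (.inl (hchild w hw)), (hS (hchild w hw)).2 ⟨rfl, hparent⟩⟩,
      fun v ⟨hwv, hv⟩ ↦ ?_⟩
    rcases h.adj_iff.1 hwv with hwv | hvw
    · exact ((hS hwv).1 hv).1
    · exact absurd hv (hparent v hvw)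

end IsParentRel

section Forest

variable {V : Type*} {G : SimpleGraph V}

lemma penultimate_eq_of_adj_of_dist_lt (hG : G.IsAcyclic) {r u v : V} {p : G.Walk r v}
    (hp : p.IsPath) (huv : G.Adj u v) (hlt : G.dist r u < G.dist r v) : p.penultimate = u := by
  obtain ⟨q, hq, hlen⟩ := (p.reachable.trans huv.symm.reachable).exists_path_of_dist
  have hv : v ∉ q.support := fun hv ↦ by
    classical
    have := SimpleGraph.dist_le (q.takeUntil v hv)
    have := q.length_takeUntil_le_length hv
    omega
  have hpq : p = q.concat huv :=
    congrArg Subtype.val ((hG.subsingleton_path r v).elim ⟨p, hp⟩ ⟨_, hq.concat hv huv⟩)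
  rw [hpq, SimpleGraph.Walk.penultimate_concat]

lemma eq_of_adj_of_dist_lt (hG : G.IsAcyclic) {r u v w : V} (huv : G.Adj u v) (hwv : G.Adj w v)
    (hu : G.dist r u < G.dist r v) (hw : G.dist r w < G.dist r v) : u = w := by
  obtain ⟨p, hp, -⟩ :=
    (SimpleGraph.Reachable.of_dist_ne_zero (Nat.ne_zero_of_lt hu)).exists_path_of_dist
  rw [← penultimate_eq_of_adj_of_dist_lt hG hp huv hu,
    penultimate_eq_of_adj_of_dist_lt hG hp hwv hw]

/-- The distance of `v` from a root chosen arbitrarily in its connected component. -/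
noncomputable def rootDist (G : SimpleGraph V) (v : V) : ℕ :=
  G.dist (G.connectedComponentMk v).out v

lemma isParentRel_rootDist (hG : G.IsAcyclic) :
    IsParentRel G fun u v ↦ G.Adj u v ∧ rootDist G u < rootDist G v := by
  have same_root {u v} (huv : G.Adj u v) :
      rootDist G u = G.dist (G.connectedComponentMk v).out u := by
    rw [rootDist, SimpleGraph.ConnectedComponent.connectedComponentMk_eq_of_adj huv]
  refine ⟨fun {u v} ↦ ⟨fun huv ↦ ?_, ?_⟩, ?_, ?_⟩
  · have hroot : G.Reachable (G.connectedComponentMk v).out v :=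
      SimpleGraph.ConnectedComponent.exact (Quot.out_eq _)
    have hne : rootDist G u ≠ rootDist G v :=
      same_root huv ▸ (hG.dist_ne_of_adj huv.symm hroot).symm
    exact hne.lt_or_gt.imp (⟨huv, ·⟩) (⟨huv.symm, ·⟩)
  · rintro (h | h)
    exacts [h.1, h.1.symm]
  · rintro u v w ⟨huv, hu⟩ ⟨hwv, hw⟩
    rw [same_root huv] at hu
    rw [same_root hwv] at hw
    exact eq_of_adj_of_dist_lt hG huv hwv hu hw
  · exact Subrelation.wf (fun h ↦ h.2) (measure (rootDist G)).wf

theorem exists_set_existsUnique_adj_mem_of_isAcyclic (hG : G.IsAcyclic) :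
    ∃ S : Set V, ∀ w, (G.neighborSet w).Nontrivial → ∃! v, G.Adj w v ∧ v ∈ S := by
  have hparent := isParentRel_rootDist hG
  obtain ⟨S, hS⟩ := hparent.exists_set_existsUnique_adj_mem
  exact ⟨S, fun w hw ↦ hS w (hparent.exists_child hw)⟩

theorem stmt_9_general (hG : G.IsAcyclic) (color : V → Bool)
    (hproper : ∀ ⦃u v : V⦄, G.Adj u v → color u ≠ color v) :
    ∃ X ⊆ G.edgeSet,
      (∀ w, color w = true → (G.neighborSet w).Nontrivial → ∃! u, G.Adj w u ∧ s(w, u) ∈ X) ∧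
      (∀ b, color b = false →
        (∀ u, G.Adj b u → s(b, u) ∉ X) ∨ (∀ u, G.Adj b u → s(b, u) ∈ X)) := by
  obtain ⟨S, hS⟩ := exists_set_existsUnique_adj_mem_of_isAcyclic hG
  let X : Set (Sym2 V) := {e ∈ G.edgeSet | ∃ b ∈ e, color b = false ∧ b ∈ S}
  have mem_X_iff {w b} (hb : color b = false) (hwb : G.Adj w b) : s(w, b) ∈ X ↔ b ∈ S := by
    have hw : color w = true := by simpa [hb] using hproper hwb
    simp [X, hwb, hw, hb]
  refine ⟨X, Set.sep_subset _ _, fun w hw hdeg ↦ ?_, fun b hb ↦ ?_⟩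
  · have hiff u : G.Adj w u ∧ s(w, u) ∈ X ↔ G.Adj w u ∧ u ∈ S :=
      and_congr_right fun hwu ↦ mem_X_iff (by simpa [hw] using (hproper hwu).symm) hwu
    simpa only [hiff] using hS w hdeg
  · have hiff {u} (hbu : G.Adj b u) : s(b, u) ∈ X ↔ b ∈ S := by
      rw [Sym2.eq_swap, mem_X_iff hb hbu.symm]
    by_cases hbS : b ∈ S
    · exact .inr fun u hbu ↦ (hiff hbu).2 hbS
    · exact .inl fun u hbu ↦ mt (hiff hbu).1 hbS

end Forest

/-- For `d ≥ 3` and `δ ≥ 2`, every finite tree with a proper white/black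
2-coloring admits a set `X` of edges such that every white vertex of degree exactly `d` is
incident to exactly one edge of `X`, and every black vertex of degree exactly `δ` is incident
to either `0` or `δ` edges of `X` (the "special problem"). -/
theorem stmt_9 {V : Type*} [Fintype V] [DecidableEq V]
    (G : SimpleGraph V) [DecidableRel G.Adj] (hT : G.IsTree)
    (d δ : ℕ) (hd : 3 ≤ d) (hδ : 2 ≤ δ)
    (color : V → Bool)
    (hproper : ∀ ⦃u v : V⦄, G.Adj u v → color u ≠ color v) :
    ∃ X : Finset (Sym2 V), ↑X ⊆ G.edgeSet ∧
      (∀ w : V, color w = true → G.degree w = d → degIn G X w = 1) ∧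
      (∀ w : V, color w = false → G.degree w = δ →
        (degIn G X w = 0 ∨ degIn G X w = δ)) := by
  obtain ⟨X, hX, hwhite, hblack⟩ := stmt_9_general hT.isAcyclic color hproper
  lift X to Finset (Sym2 V) using X.toFinite
  refine ⟨X, hX, fun w hw hdeg ↦ degIn_eq_one_iff.2 (hwhite w hw ?_), fun b hb hdeg ↦ ?_⟩
  · exact nontrivial_neighborSet_iff_one_lt_degree.2 (by omega)
  · exact hdeg ▸ (hblack b hb).imp degIn_eq_zero_iff.2 degIn_eq_degree_iff.2
end

section
/- Let Π = (d, δ, W, B) be a binary labeling problem with d ≥ 3 or δ ≥ 3 that is not of type I, II, III, or IV. Then there exist W″ with W ⊆ W″ ⊆ {0,1,…,d} and B″ with B ⊆ B″ ⊆ {0,1,…,δ} such that the problem (d, δ, W″, B″) is equivalent to a forbidden degree problem — a problem of the form (d₀, δ₀, {0,…,d₀}∖{i}, {1,…,δ₀−1}) for some integer i with 0 < i < d₀ — or to the bipartite sinkless orientation problem — a problem of the form (d₀, δ₀, {0,…,d₀−1}, {1,…,δ₀}). -/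
/-- `(d₂, δ₂, W₂, B₂)` is equivalent to `(d₁, δ₁, W₁, B₁)`: it equals the problem itself, or
is obtained from it by exchanging colors, complementing, or both. -/
def EquivProb (d₁ δ₁ : ℕ) (W₁ B₁ : Set ℕ) (d₂ δ₂ : ℕ) (W₂ B₂ : Set ℕ) : Prop :=
  (d₂ = d₁ ∧ δ₂ = δ₁ ∧ W₂ = W₁ ∧ B₂ = B₁) ∨
  (d₂ = δ₁ ∧ δ₂ = d₁ ∧ W₂ = B₁ ∧ B₂ = W₁) ∨
  (d₂ = d₁ ∧ δ₂ = δ₁ ∧ W₂ = (fun x => d₁ - x) '' W₁ ∧ B₂ = (fun x => δ₁ - x) '' B₁) ∨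
  (d₂ = δ₁ ∧ δ₂ = d₁ ∧ W₂ = (fun x => δ₁ - x) '' B₁ ∧ B₂ = (fun x => d₁ - x) '' W₁)

def TypeI (d δ : ℕ) (W B : Set ℕ) : Prop :=
  (W = {0} ∧ 0 ∉ B) ∨ (W = {d} ∧ δ ∉ B) ∨ (0 ∉ W ∧ B = {0}) ∨ (d ∉ W ∧ B = {δ})

def TypeII (W B : Set ℕ) : Prop := W = ∅ ∨ B = ∅

def TypeIII (d δ : ℕ) (W B : Set ℕ) : Prop :=
  (W ≠ ∅ ∧ B = Set.Icc 0 δ) ∨ (W = Set.Icc 0 d ∧ B ≠ ∅)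

def TypeIV (d δ : ℕ) (W B : Set ℕ) : Prop :=
  (0 ∈ W ∧ 0 ∈ B) ∨ (d ∈ W ∧ δ ∈ B)

/-!
If `d ∉ W` and `0 ∉ B`, then the problem relaxes to bipartite sinkless orientation, and so it does,
with the two sides exchanged, if `0 ∉ W` and `δ ∉ B`. If neither happens, then `d ∈ W` or `0 ∈ B`,
and `0 ∈ W` or `δ ∈ B`; since the problem is not of type IV, one side contains both of its extreme
degrees and the other side neither. The former side misses some intermediate degree `i`, so the
problem relaxes to forbidden degree `i`.
-/

section PartialOrder

variable {α : Type*} [PartialOrder α] {a b : α} {s : Set α}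

theorem exists_mem_Ioo_notMem_of_ssubset_Icc (hs : s ⊂ Set.Icc a b) (ha : a ∈ s) (hb : b ∈ s) :
    ∃ i ∈ Set.Ioo a b, i ∉ s := by
  obtain ⟨i, ⟨hai, hib⟩, his⟩ := Set.exists_of_ssubset hs
  have hne_a : a ≠ i := ne_of_mem_of_not_mem ha his
  have hne_b : i ≠ b := (ne_of_mem_of_not_mem hb his).symm
  exact ⟨i, ⟨hai.lt_of_ne hne_a, hib.lt_of_ne hne_b⟩, his⟩

theorem subset_Icc_succ_left [SuccOrder α] (hs : s ⊆ Set.Icc a b) (ha : a ∉ s) :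
    s ⊆ Set.Icc (Order.succ a) b :=
  fun _ hx =>
    ⟨Order.succ_le_of_lt ((hs hx).1.lt_of_ne (ne_of_mem_of_not_mem hx ha).symm), (hs hx).2⟩

theorem subset_Icc_pred_right [PredOrder α] (hs : s ⊆ Set.Icc a b) (hb : b ∉ s) :
    s ⊆ Set.Icc a (Order.pred b) :=
  fun _ hx => ⟨(hs hx).1, Order.le_pred_of_lt ((hs hx).2.lt_of_ne (ne_of_mem_of_not_mem hx hb))⟩

end PartialOrder

/-- The problem `(d, δ, W, B)` is equivalent to a forbidden degree problem
`(d₀, δ₀, {0,…,d₀} \ {i}, {1,…,δ₀-1})` with `0 < i < d₀`. -/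
def EquivForbiddenDegree (d δ : ℕ) (W B : Set ℕ) : Prop :=
  ∃ d₀ δ₀ i : ℕ, 2 ≤ d₀ ∧ 2 ≤ δ₀ ∧ 0 < i ∧ i < d₀ ∧
    EquivProb d δ W B d₀ δ₀ (Set.Icc 0 d₀ \ {i}) (Set.Icc 1 (δ₀ - 1))

/-- The problem `(d, δ, W, B)` is equivalent to a bipartite sinkless orientation problem
`(d₀, δ₀, {0,…,d₀-1}, {1,…,δ₀})`. -/
def EquivSinklessOrientation (d δ : ℕ) (W B : Set ℕ) : Prop :=
  ∃ d₀ δ₀ : ℕ, 2 ≤ d₀ ∧ 2 ≤ δ₀ ∧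
    EquivProb d δ W B d₀ δ₀ (Set.Icc 0 (d₀ - 1)) (Set.Icc 1 δ₀)

/-- Enlarging `W` within `{0,…,d}` and `B` within `{0,…,δ}` can turn `(d, δ, W, B)` into a problem
equivalent to one of the two canonical ones, forbidden degree or bipartite sinkless orientation. -/
def HasCanonicalRelaxation (d δ : ℕ) (W B : Set ℕ) : Prop :=
  ∃ W' B' : Set ℕ, W ⊆ W' ∧ (∀ x ∈ W', x ≤ d) ∧ B ⊆ B' ∧ (∀ x ∈ B', x ≤ δ) ∧
    (EquivForbiddenDegree d δ W' B' ∨ EquivSinklessOrientation d δ W' B')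

theorem EquivProb.refl (d δ : ℕ) (W B : Set ℕ) : EquivProb d δ W B d δ W B :=
  Or.inl ⟨rfl, rfl, rfl, rfl⟩

theorem EquivProb.swap {d₁ δ₁ d₂ δ₂ : ℕ} {W₁ B₁ W₂ B₂ : Set ℕ}
    (h : EquivProb d₁ δ₁ W₁ B₁ d₂ δ₂ W₂ B₂) : EquivProb δ₁ d₁ B₁ W₁ d₂ δ₂ W₂ B₂ := by
  rcases h with same | exchanged | complemented | both
  · exact Or.inr (Or.inl same)
  · exact Or.inl exchanged
  · exact Or.inr (Or.inr (Or.inr complemented))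
  · exact Or.inr (Or.inr (Or.inl both))

section

variable {d δ : ℕ} {W B : Set ℕ}

theorem EquivForbiddenDegree.swap (h : EquivForbiddenDegree d δ W B) :
    EquivForbiddenDegree δ d B W := by
  obtain ⟨d₀, δ₀, i, hd₀, hδ₀, hi, hid₀, hequiv⟩ := h
  exact ⟨d₀, δ₀, i, hd₀, hδ₀, hi, hid₀, hequiv.swap⟩

theorem EquivSinklessOrientation.swap (h : EquivSinklessOrientation d δ W B) :
    EquivSinklessOrientation δ d B W := by
  obtain ⟨d₀, δ₀, hd₀, hδ₀, hequiv⟩ := h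
  exact ⟨d₀, δ₀, hd₀, hδ₀, hequiv.swap⟩

theorem HasCanonicalRelaxation.swap (h : HasCanonicalRelaxation d δ W B) :
    HasCanonicalRelaxation δ d B W := by
  obtain ⟨W', B', hWW', hW', hBB', hB', hcanonical⟩ := h
  exact ⟨B', W', hBB', hB', hWW', hW',
    hcanonical.imp EquivForbiddenDegree.swap EquivSinklessOrientation.swap⟩

theorem hasCanonicalRelaxation_of_notMem_of_notMem (hd : 2 ≤ d) (hδ : 2 ≤ δ)
    (hW : W ⊆ Set.Icc 0 d) (hB : B ⊆ Set.Icc 0 δ) (hdW : d ∉ W) (h0B : 0 ∉ B) :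
    HasCanonicalRelaxation d δ W B :=
  ⟨Set.Icc 0 (d - 1), Set.Icc 1 δ,
    subset_Icc_pred_right hW hdW, fun _ hx => hx.2.trans (d.sub_le 1),
    subset_Icc_succ_left hB h0B, fun _ hx => hx.2,
    Or.inr ⟨d, δ, hd, hδ, EquivProb.refl ..⟩⟩

theorem hasCanonicalRelaxation_of_mem_of_mem (hd : 2 ≤ d) (hδ : 2 ≤ δ)
    (hW : W ⊂ Set.Icc 0 d) (hB : B ⊆ Set.Icc 0 δ) (hIV : ¬ TypeIV d δ W B)
    (h0W : 0 ∈ W) (hdW : d ∈ W) : HasCanonicalRelaxation d δ W B := by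
  obtain ⟨i, ⟨hi, hid⟩, hiW⟩ := exists_mem_Ioo_notMem_of_ssubset_Icc hW h0W hdW
  have h0B : 0 ∉ B := fun h0B => hIV (Or.inl ⟨h0W, h0B⟩)
  have hδB : δ ∉ B := fun hδB => hIV (Or.inr ⟨hdW, hδB⟩)
  exact ⟨Set.Icc 0 d \ {i}, Set.Icc 1 (δ - 1),
    Set.subset_sdiff_singleton hW.subset hiW, fun _ hx => hx.1.2,
    subset_Icc_pred_right (subset_Icc_succ_left hB h0B) hδB,
    fun _ hx => hx.2.trans (δ.sub_le 1),
    Or.inl ⟨d, δ, i, hd, hδ, hi, hid, EquivProb.refl ..⟩⟩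

theorem TypeIV.swap (h : TypeIV d δ W B) : TypeIV δ d B W :=
  h.imp And.symm And.symm

theorem stmt_11_general (hd : 2 ≤ d) (hδ : 2 ≤ δ) (hW : W ⊂ Set.Icc 0 d) (hB : B ⊂ Set.Icc 0 δ)
    (hIV : ¬ TypeIV d δ W B) : HasCanonicalRelaxation d δ W B := by
  by_cases hd0 : d ∉ W ∧ 0 ∉ B
  · exact hasCanonicalRelaxation_of_notMem_of_notMem hd hδ hW.subset hB.subset hd0.1 hd0.2
  by_cases hδ0 : δ ∉ B ∧ 0 ∉ W
  · exact (hasCanonicalRelaxation_of_notMem_of_notMem hδ hd hB.subset hW.subset hδ0.1 hδ0.2).swap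
  have hdW_or : d ∈ W ∨ 0 ∈ B := by tauto
  have hδB_or : δ ∈ B ∨ 0 ∈ W := by tauto
  rcases hdW_or with hdW | h0B <;> rcases hδB_or with hδB | h0W
  · exact absurd (Or.inr ⟨hdW, hδB⟩) hIV
  · exact hasCanonicalRelaxation_of_mem_of_mem hd hδ hW hB.subset hIV h0W hdW
  · exact (hasCanonicalRelaxation_of_mem_of_mem hδ hd hB hW.subset (mt TypeIV.swap hIV)
      h0B hδB).swap
  · exact absurd (Or.inl ⟨h0W, h0B⟩) hIV

theorem ssubset_Icc_of_not_typeII_of_not_typeIII (hW : ∀ x ∈ W, x ≤ d) (hB : ∀ x ∈ B, x ≤ δ)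
    (hII : ¬ TypeII W B) (hIII : ¬ TypeIII d δ W B) :
    W ⊂ Set.Icc 0 d ∧ B ⊂ Set.Icc 0 δ := by
  obtain ⟨hW_ne, hB_ne⟩ := not_or.mp hII
  have hW_sub : W ⊆ Set.Icc 0 d := fun x hx => ⟨x.zero_le, hW x hx⟩
  have hB_sub : B ⊆ Set.Icc 0 δ := fun x hx => ⟨x.zero_le, hB x hx⟩
  exact ⟨hW_sub.ssubset_of_ne fun h => hIII (Or.inr ⟨h, hB_ne⟩),
    hB_sub.ssubset_of_ne fun h => hIII (Or.inl ⟨hW_ne, h⟩)⟩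

end

/-- Any binary labeling problem with `d ≥ 3` or `δ ≥ 3` that is not of type
I–IV can be relaxed to a problem equivalent to a forbidden degree problem
`(d₀, δ₀, {0,…,d₀} \ {i}, {1,…,δ₀-1})` with `0 < i < d₀`, or to the bipartite sinkless
orientation problem `(d₀, δ₀, {0,…,d₀-1}, {1,…,δ₀})`. -/
theorem stmt_11 (d δ : ℕ) (hd : 2 ≤ d) (hδ : 2 ≤ δ) (hdδ : 3 ≤ d ∨ 3 ≤ δ)
    (W B : Set ℕ) (hWd : ∀ x ∈ W, x ≤ d) (hBδ : ∀ x ∈ B, x ≤ δ)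
    (h1 : ¬ TypeI d δ W B) (h2 : ¬ TypeII W B) (h3 : ¬ TypeIII d δ W B)
    (h4 : ¬ TypeIV d δ W B) :
    ∃ W'' B'' : Set ℕ, W ⊆ W'' ∧ (∀ x ∈ W'', x ≤ d) ∧ B ⊆ B'' ∧ (∀ x ∈ B'', x ≤ δ) ∧
      ((∃ d₀ δ₀ i : ℕ, 2 ≤ d₀ ∧ 2 ≤ δ₀ ∧ 0 < i ∧ i < d₀ ∧
          EquivProb d δ W'' B'' d₀ δ₀ (Set.Icc 0 d₀ \ {i}) (Set.Icc 1 (δ₀ - 1))) ∨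
       (∃ d₀ δ₀ : ℕ, 2 ≤ d₀ ∧ 2 ≤ δ₀ ∧
          EquivProb d δ W'' B'' d₀ δ₀ (Set.Icc 0 (d₀ - 1)) (Set.Icc 1 δ₀))) := by
  obtain ⟨hW, hB⟩ := ssubset_Icc_of_not_typeII_of_not_typeIII hWd hBδ h2 h3
  exact stmt_11_general hd hδ hW hB h4
end

section
/- Let d ≥ 3 and let G be a finite simple d-regular graph on n vertices equipped with an orientation of its edges such that every vertex has out-degree 0, 1, or d. Then the set S of vertices with out-degree exactly d is an independent set of G, and |S| ≥ (d−2)·n/(3d). -/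
/-- The out-degree of `v` under the orientation `o` of (the edges of) `G`:
`o u v = true` means that the edge `{u, v}` is oriented `u → v`. -/
def outdegree {V : Type*} [Fintype V] [DecidableEq V] (G : SimpleGraph V) [DecidableRel G.Adj]
    (o : V → V → Bool) (v : V) : ℕ :=
  ((G.neighborFinset v).filter (fun u => o v u = true)).card

/-!
Each edge is outgoing at exactly one of its ends, so the out-degrees sum to the number of edges,
`n * d / 2`. A vertex outside `S` contributes at most `1` to that sum and a vertex of `S`
contributes `d`, whence `n * d / 2 ≤ n + (d - 1) * |S|`, that is
`(d - 2) * n ≤ 2 * (d - 1) * |S|`. Independence holds because an edge inside `S` would be outgoing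
at both ends.
-/

section

open Finset

lemma sum_add_card_nsmul_le_of_le_or_eq {ι M : Type*} [AddCommMonoid M] [PartialOrder M]
    [IsOrderedAddMonoid M] [DecidableEq M] {s : Finset ι} {f : ι → M} {a b : M}
    (hf : ∀ i ∈ s, f i ≤ a ∨ f i = b) :
    ∑ i ∈ s, f i + #{i ∈ s | f i = b} • a ≤ #s • a + #{i ∈ s | f i = b} • b := by
  have sum_eq : ∑ i ∈ s with f i = b, f i = #{i ∈ s | f i = b} • b :=
    sum_eq_card_nsmul fun i hi => (mem_filter.mp hi).2
  have sum_ne_le : ∑ i ∈ s with f i ≠ b, f i ≤ #{i ∈ s | f i ≠ b} • a :=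
    sum_le_card_nsmul _ _ _ fun i hi =>
      (hf i (mem_filter.mp hi).1).resolve_right (mem_filter.mp hi).2
  calc ∑ i ∈ s, f i + #{i ∈ s | f i = b} • a
      = #{i ∈ s | f i = b} • b + ∑ i ∈ s with f i ≠ b, f i + #{i ∈ s | f i = b} • a := by
        rw [← sum_eq, sum_filter_add_sum_filter_not]
    _ ≤ #{i ∈ s | f i = b} • b + #{i ∈ s | f i ≠ b} • a + #{i ∈ s | f i = b} • a := by gcongr
    _ = #s • a + #{i ∈ s | f i = b} • b := by
        rw [add_assoc, ← add_nsmul, add_comm #{i ∈ s | f i ≠ b},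
          card_filter_add_card_filter_not, add_comm]

variable {V : Type*} {G : SimpleGraph V} {o : V → V → Bool}

/-- `o` orients every edge `{u, v}` of `G` in exactly one direction, where `o u v = true` stands
for `u → v`; the values of `o` on non-adjacent pairs are arbitrary. -/
def IsOrientation (G : SimpleGraph V) (o : V → V → Bool) : Prop :=
  ∀ ⦃u v : V⦄, G.Adj u v → o u v = !o v u

variable [Fintype V] [DecidableEq V] [DecidableRel G.Adj]

lemma outdegree_eq_degree_iff {v : V} :
    outdegree G o v = G.degree v ↔ ∀ u, G.Adj v u → o v u = true := by
  simp only [outdegree, ← G.card_neighborFinset_eq_degree, card_filter_eq_iff,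
    G.mem_neighborFinset]

variable (G o) in
lemma sum_outdegree_flip : ∑ v, outdegree G (flip o) v = ∑ v, outdegree G o v := by
  have := sum_card_bipartiteAbove_eq_sum_card_bipartiteBelow (s := univ) (t := univ)
    fun u v => G.Adj u v ∧ o u v = true
  simpa only [bipartiteAbove, bipartiteBelow, outdegree, flip, G.neighborFinset_eq_filter,
    filter_filter, G.adj_comm] using this.symm

namespace IsOrientation

lemma outdegree_add_outdegree_flip (ho : IsOrientation G o) (v : V) :
    outdegree G o v + outdegree G (flip o) v = G.degree v := by
  have incoming_iff : ∀ u ∈ G.neighborFinset v, flip o v u = true ↔ ¬ o v u = true := by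
    intro u hu
    simp [flip, ho ((G.mem_neighborFinset v u).mp hu)]
  rw [outdegree, outdegree, filter_congr incoming_iff, card_filter_add_card_filter_not,
    G.card_neighborFinset_eq_degree]

lemma sum_outdegree_eq_card_edgeFinset (ho : IsOrientation G o) :
    ∑ v, outdegree G o v = #G.edgeFinset := by
  have two_mul_sum : 2 * ∑ v, outdegree G o v = 2 * #G.edgeFinset := calc
    2 * ∑ v, outdegree G o v = ∑ v, outdegree G o v + ∑ v, outdegree G (flip o) v := by
      rw [sum_outdegree_flip, two_mul]
    _ = ∑ v, G.degree v := by
      simp only [← sum_add_distrib, ho.outdegree_add_outdegree_flip]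
    _ = 2 * #G.edgeFinset := G.sum_degrees_eq_twice_card_edges
  exact Nat.eq_of_mul_eq_mul_left two_pos two_mul_sum

lemma not_adj_of_outdegree_eq_degree (ho : IsOrientation G o) {u v : V}
    (hu : outdegree G o u = G.degree u) (hv : outdegree G o v = G.degree v) : ¬ G.Adj u v := by
  intro huv
  have huv_out : o u v = true := outdegree_eq_degree_iff.mp hu v huv
  have hvu_out : o v u = true := outdegree_eq_degree_iff.mp hv u huv.symm
  simpa [huv_out, hvu_out] using ho huv

lemma card_edgeFinset_add_card_le (ho : IsOrientation G o) {d : ℕ}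
    (hout : ∀ v, outdegree G o v ≤ 1 ∨ outdegree G o v = d) :
    #G.edgeFinset + #{v | outdegree G o v = d} ≤
      Fintype.card V + #{v | outdegree G o v = d} * d := by
  simpa only [ho.sum_outdegree_eq_card_edgeFinset, smul_eq_mul, mul_one, card_univ] using
    sum_add_card_nsmul_le_of_le_or_eq (s := univ) fun v _ => hout v

lemma sub_two_mul_card_le (ho : IsOrientation G o) {d : ℕ} (hreg : G.IsRegularOfDegree d)
    (hout : ∀ v, outdegree G o v ≤ 1 ∨ outdegree G o v = d) :
    ((d : ℝ) - 2) * Fintype.card V ≤ 2 * (d - 1) * #{v | outdegree G o v = d} := by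
  have card_mul_degree : (Fintype.card V * d : ℝ) = 2 * #G.edgeFinset := by
    norm_cast
    simp [← G.sum_degrees_eq_twice_card_edges, hreg.degree_eq]
  have card_edges_le : (#G.edgeFinset + #{v | outdegree G o v = d} : ℝ) ≤
      Fintype.card V + #{v | outdegree G o v = d} * d :=
    mod_cast ho.card_edgeFinset_add_card_le hout
  linarith

end IsOrientation

end

/-- In a finite simple `d`-regular graph (`d ≥ 3`) on `n` vertices with an
orientation in which every vertex has out-degree `0`, `1`, or `d`, the set `S` of vertices of
out-degree exactly `d` is independent and satisfies `|S| ≥ (d-2)·n/(3d)`. -/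
theorem stmt_18 {V : Type*} [Fintype V] [DecidableEq V]
    (G : SimpleGraph V) [DecidableRel G.Adj]
    (d : ℕ) (hd : 3 ≤ d) (hreg : ∀ v : V, G.degree v = d)
    (o : V → V → Bool)
    (ho : ∀ ⦃u v : V⦄, G.Adj u v → o u v = !o v u)
    (hout : ∀ v : V, outdegree G o v = 0 ∨ outdegree G o v = 1 ∨ outdegree G o v = d) :
    (∀ u v : V, outdegree G o u = d → outdegree G o v = d → ¬ G.Adj u v) ∧
    ((d : ℝ) - 2) * (Fintype.card V) / (3 * d) ≤
      ({v : V | outdegree G o v = d}.ncard : ℝ) := by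
  have orientation : IsOrientation G o := ho
  constructor
  · intro u v hu hv
    exact orientation.not_adj_of_outdegree_eq_degree (hu.trans (hreg u).symm)
      (hv.trans (hreg v).symm)
  · have sharp_bound := orientation.sub_two_mul_card_le hreg fun v => by
      have := hout v
      omega
    have constant_le : 2 * ((d : ℝ) - 1) ≤ 3 * d := by
      linarith [d.cast_nonneg (α := ℝ)]
    rw [Set.ncard_eq_toFinset_card', Set.toFinset_ofPred, div_le_iff₀ (by positivity),
      mul_comm (Nat.cast _) (3 * (d : ℝ))]
    exact sharp_bound.trans (by gcongr)
end

section
/- Let d ≥ 2 and r ≥ 0 be integers with 2r < d, and let G be a finite simple d-regular graph on n vertices (so with m = dn/2 edges) equipped with an orientation of its edges such that every vertex has out-degree at most r or in-degree at most r. Let S be the set of vertices with out-degree at most r. Then the number of edges of G with exactly one endpoint in S is at least (d−2r)·max(|S|, n−|S|); in particular, it is at least (1 − 2r/d)·m. -/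
/-- The in-degree of `v` under the orientation `o` of (the edges of) `G`. -/
def indegree {V : Type*} [Fintype V] [DecidableEq V] (G : SimpleGraph V) [DecidableRel G.Adj]
    (o : V → V → Bool) (v : V) : ℕ :=
  ((G.neighborFinset v).filter (fun u => o u v = true)).card

/-!
An arc ending in a set `S` either starts in `S` or crosses the cut, so the in-degrees over `S` sum
to at most the out-degrees over `S` plus the size of the cut. Out-degrees at most `r` on `S` thus
give `∑ v ∈ S, deg v ≤ 2r|S| + |cut|`. Reversing all arcs gives the same bound for the complement.
Each of the two bounds yields one term of the maximum, and their sum yields the bound in terms of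
the number of edges.
-/

open Finset

section EdgeCut

variable {V : Type*}

/-- The edge boundary of `S` in `G`: the edges with exactly one endpoint in `S`. -/
def edgeCut (G : SimpleGraph V) (S : Set V) : Set (Sym2 V) :=
  {e | e ∈ G.edgeSet ∧ ∃ u v : V, e = s(u, v) ∧ u ∈ S ∧ v ∉ S}

lemma edgeCut_compl (G : SimpleGraph V) (S : Set V) : edgeCut G Sᶜ = edgeCut G S := by
  ext e
  constructor
  · rintro ⟨he, u, v, rfl, hu, hv⟩
    exact ⟨he, v, u, Sym2.eq_swap, not_not.mp hv, hu⟩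
  · rintro ⟨he, u, v, rfl, hu, hv⟩
    exact ⟨he, v, u, Sym2.eq_swap, hv, not_not.mpr hu⟩

variable [Fintype V] [DecidableEq V] (G : SimpleGraph V) [DecidableRel G.Adj]

lemma coe_image_interedges_compl (S : Finset V) :
    ((G.interedges S Sᶜ).image Sym2.mk.uncurry : Set (Sym2 V)) = edgeCut G S := by
  ext e
  simp only [coe_image, Set.mem_image, mem_coe, SimpleGraph.mem_interedges_iff, mem_compl]
  constructor
  · rintro ⟨⟨u, v⟩, ⟨hu, hv, huv⟩, rfl⟩
    exact ⟨huv, u, v, rfl, hu, hv⟩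
  · rintro ⟨he, u, v, rfl, hu, hv⟩
    exact ⟨(u, v), ⟨hu, hv, he⟩, rfl⟩

lemma injOn_sym2Mk_interedges_compl (S : Finset V) :
    Set.InjOn Sym2.mk.uncurry (G.interedges S Sᶜ : Set (V × V)) := by
  rintro ⟨u, v⟩ huv ⟨u', v'⟩ huv' heq
  simp only [mem_coe, SimpleGraph.mk_mem_interedges_iff, mem_compl] at huv huv'
  rcases Sym2.eq_iff.mp heq with ⟨rfl, rfl⟩ | ⟨rfl, rfl⟩
  · rfl
  · exact absurd huv.1 huv'.2.1

lemma ncard_edgeCut (S : Finset V) : (edgeCut G S).ncard = #(G.interedges S Sᶜ) := by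
  rw [← coe_image_interedges_compl, Set.ncard_coe_finset,
    card_image_of_injOn (injOn_sym2Mk_interedges_compl G S)]

end EdgeCut

lemma card_relInteredges_eq_sum {α β : Type*} (R : α → β → Prop) [∀ a, DecidablePred (R a)]
    (s : Finset α) (t : Finset β) : #(Rel.interedges R s t) = ∑ a ∈ s, #{b ∈ t | R a b} := by
  simp only [Rel.interedges, card_filter, sum_product]

lemma card_relInteredges_eq_sum_right {α β : Type*} (R : α → β → Prop) [∀ a, DecidablePred (R a)]
    (s : Finset α) (t : Finset β) : #(Rel.interedges R s t) = ∑ b ∈ t, #{a ∈ s | R a b} := by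
  simp only [Rel.interedges, card_filter, sum_product_right]

section Orientation

variable {V : Type*} (G : SimpleGraph V) (o : V → V → Bool)

/-- The edge `{u, v}` of `G` is oriented `u → v` by `o`. Values of `o` on non-adjacent pairs are
ignored. -/
abbrev IsArc (u v : V) : Prop := G.Adj u v ∧ o u v = true

variable [Fintype V] [DecidableEq V] [DecidableRel G.Adj]

lemma sum_outdegree_eq_card_arcs (S : Finset V) :
    ∑ v ∈ S, outdegree G o v = #(Rel.interedges (IsArc G o) S univ) := by
  simp only [card_relInteredges_eq_sum, outdegree, SimpleGraph.neighborFinset_eq_filter,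
    filter_filter]

lemma sum_indegree_eq_card_arcs (S : Finset V) :
    ∑ v ∈ S, indegree G o v = #(Rel.interedges (IsArc G o) univ S) := by
  simp only [card_relInteredges_eq_sum_right, indegree, SimpleGraph.neighborFinset_eq_filter,
    filter_filter, IsArc, G.adj_comm]

lemma sum_indegree_le_sum_outdegree_add_ncard_edgeCut (S : Finset V) :
    ∑ v ∈ S, indegree G o v ≤ ∑ v ∈ S, outdegree G o v + (edgeCut G S).ncard := by
  have arc_into_subset : Rel.interedges (IsArc G o) univ S ⊆
      Rel.interedges (IsArc G o) S univ ∪ G.interedges Sᶜ S := by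
    rintro ⟨u, v⟩ huv
    simp only [mem_union, Rel.mk_mem_interedges_iff, SimpleGraph.mk_mem_interedges_iff, mem_univ,
      mem_compl, true_and] at huv ⊢
    tauto
  calc ∑ v ∈ S, indegree G o v
      = #(Rel.interedges (IsArc G o) univ S) := sum_indegree_eq_card_arcs G o S
    _ ≤ #(Rel.interedges (IsArc G o) S univ) + #(G.interedges Sᶜ S) :=
        (card_le_card arc_into_subset).trans (card_union_le _ _)
    _ = ∑ v ∈ S, outdegree G o v + (edgeCut G S).ncard := by
        rw [sum_outdegree_eq_card_arcs, ← edgeCut_compl, ← coe_compl, ncard_edgeCut, compl_compl]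

variable {G o}

lemma degree_le_outdegree_add_indegree (ho : ∀ ⦃u v : V⦄, G.Adj u v → o u v ∨ o v u) (v : V) :
    G.degree v ≤ outdegree G o v + indegree G o v := by
  rw [← G.card_neighborFinset_eq_degree, outdegree, indegree]
  refine (card_le_card fun u hu ↦ ?_).trans (card_union_le _ _)
  rw [← filter_or, mem_filter]
  exact ⟨hu, ho ((G.mem_neighborFinset v u).mp hu)⟩

lemma sum_degree_le_add_ncard_edgeCut (ho : ∀ ⦃u v : V⦄, G.Adj u v → o u v ∨ o v u) {r : ℕ}
    {S : Finset V} (hS : ∀ v ∈ S, outdegree G o v ≤ r) :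
    ∑ v ∈ S, G.degree v ≤ 2 * r * #S + (edgeCut G S).ncard := by
  have sum_outdegree_le : ∑ v ∈ S, outdegree G o v ≤ #S * r := sum_le_card_nsmul S _ r hS
  calc ∑ v ∈ S, G.degree v
      ≤ ∑ v ∈ S, (outdegree G o v + indegree G o v) :=
        sum_le_sum fun v _ ↦ degree_le_outdegree_add_indegree ho v
    _ = ∑ v ∈ S, outdegree G o v + ∑ v ∈ S, indegree G o v := sum_add_distrib
    _ ≤ 2 * ∑ v ∈ S, outdegree G o v + (edgeCut G S).ncard := by
        linarith [sum_indegree_le_sum_outdegree_add_ncard_edgeCut G o S]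
    _ ≤ 2 * r * #S + (edgeCut G S).ncard := by linarith

lemma sum_degree_compl_le_add_ncard_edgeCut (ho : ∀ ⦃u v : V⦄, G.Adj u v → o u v ∨ o v u)
    {r : ℕ} {S : Finset V} (hS : ∀ v ∉ S, indegree G o v ≤ r) :
    ∑ v ∈ Sᶜ, G.degree v ≤ 2 * r * #Sᶜ + (edgeCut G S).ncard := by
  have outdegree_flip_le : ∀ v ∈ Sᶜ, outdegree G (flip o) v ≤ r :=
    fun v hv ↦ hS v (mem_compl.mp hv)
  simpa only [coe_compl, edgeCut_compl] using
    sum_degree_le_add_ncard_edgeCut (fun u v huv ↦ (ho huv).symm) outdegree_flip_le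

lemma card_edgeFinset_le_add_ncard_edgeCut (ho : ∀ ⦃u v : V⦄, G.Adj u v → o u v ∨ o v u)
    {r : ℕ} {S : Finset V} (hout : ∀ v ∈ S, outdegree G o v ≤ r)
    (hin : ∀ v ∉ S, indegree G o v ≤ r) :
    #G.edgeFinset ≤ r * Fintype.card V + (edgeCut G S).ncard := by
  have degree_sum : ∑ v ∈ S, G.degree v + ∑ v ∈ Sᶜ, G.degree v = 2 * #G.edgeFinset := by
    rw [sum_add_sum_compl, G.sum_degrees_eq_twice_card_edges]
  have on_S := sum_degree_le_add_ncard_edgeCut ho hout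
  have on_compl := sum_degree_compl_le_add_ncard_edgeCut ho hin
  rw [← card_add_card_compl S]
  linarith

end Orientation

section MinDegree

variable {V : Type*} [Fintype V] {G : SimpleGraph V} [DecidableRel G.Adj] {d : ℕ}

lemma sub_mul_card_le_of_sum_degree_le {k c : ℕ} {S : Finset V} (hd : ∀ v ∈ S, d ≤ G.degree v)
    (hS : ∑ v ∈ S, G.degree v ≤ k * #S + c) : (d - k) * #S ≤ c := by
  have mul_card_le : #S * d ≤ ∑ v ∈ S, G.degree v := card_nsmul_le_sum S _ d hd
  rw [Nat.sub_mul, tsub_le_iff_left, mul_comm]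
  exact mul_card_le.trans hS

lemma card_le_two_mul_card_edgeFinset_div (hd_pos : 0 < d) (hd : ∀ v, d ≤ G.degree v) :
    (Fintype.card V : ℝ) ≤ 2 * #G.edgeFinset / d := by
  rw [le_div_iff₀ (by exact_mod_cast hd_pos)]
  have card_mul_le : Fintype.card V * d ≤ ∑ v, G.degree v :=
    card_nsmul_le_sum univ _ d fun v _ ↦ hd v
  rw [G.sum_degrees_eq_twice_card_edges] at card_mul_le
  exact_mod_cast card_mul_le

end MinDegree

theorem stmt_19_general {V : Type*} [Fintype V] [DecidableEq V]
    (G : SimpleGraph V) [DecidableRel G.Adj]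
    (d r : ℕ) (hr : 2 * r < d) (hmin : ∀ v : V, d ≤ G.degree v)
    (o : V → V → Bool)
    (ho : ∀ ⦃u v : V⦄, G.Adj u v → o u v ∨ o v u)
    (S : Set V) (hout : ∀ v ∈ S, outdegree G o v ≤ r) (hin : ∀ v ∉ S, indegree G o v ≤ r) :
    (d - 2 * r) * max S.ncard (Fintype.card V - S.ncard) ≤ (edgeCut G S).ncard ∧
    (1 - 2 * (r : ℝ) / d) * (#G.edgeFinset : ℝ) ≤ ((edgeCut G S).ncard : ℝ) := by
  lift S to Finset V using S.toFinite
  constructor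
  · rw [Set.ncard_coe_finset, ← card_compl, ← Nat.mul_max_mul_left]
    exact max_le
      (sub_mul_card_le_of_sum_degree_le (fun v _ ↦ hmin v)
        (sum_degree_le_add_ncard_edgeCut ho hout))
      (sub_mul_card_le_of_sum_degree_le (fun v _ ↦ hmin v)
        (sum_degree_compl_le_add_ncard_edgeCut ho hin))
  · have edges_le : (#G.edgeFinset : ℝ) ≤ r * Fintype.card V + (edgeCut G S).ncard := by
      exact_mod_cast card_edgeFinset_le_add_ncard_edgeCut ho hout hin
    calc (1 - 2 * (r : ℝ) / d) * (#G.edgeFinset : ℝ)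
        = #G.edgeFinset - r * (2 * #G.edgeFinset / d) := by ring
      _ ≤ #G.edgeFinset - r * Fintype.card V := by
          gcongr
          exact card_le_two_mul_card_edgeFinset_div (by omega) hmin
      _ ≤ (edgeCut G S).ncard := by linarith

/-- In a finite simple `d`-regular graph on `n` vertices (with `m = dn/2`
edges) with an orientation in which every vertex has out-degree at most `r` or in-degree at
most `r` (where `2r < d`), the set `S` of vertices of out-degree at most `r` satisfies: the
number of edges with exactly one endpoint in `S` is at least `(d - 2r)·max(|S|, n - |S|)`,
and in particular at least `(1 - 2r/d)·m`. -/
theorem stmt_19 {V : Type*} [Fintype V] [DecidableEq V]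
    (G : SimpleGraph V) [DecidableRel G.Adj]
    (d r : ℕ) (hd : 2 ≤ d) (hr : 2 * r < d) (hreg : ∀ v : V, G.degree v = d)
    (o : V → V → Bool)
    (ho : ∀ ⦃u v : V⦄, G.Adj u v → o u v = !o v u)
    (hdeg : ∀ v : V, outdegree G o v ≤ r ∨ indegree G o v ≤ r) :
    (d - 2 * r) *
        max ({v : V | outdegree G o v ≤ r}.ncard)
          (Fintype.card V - {v : V | outdegree G o v ≤ r}.ncard) ≤
      {e : Sym2 V | e ∈ G.edgeSet ∧ ∃ u v : V, e = s(u, v) ∧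
        outdegree G o u ≤ r ∧ ¬ outdegree G o v ≤ r}.ncard ∧
    (1 - 2 * (r : ℝ) / d) * (G.edgeFinset.card : ℝ) ≤
      ({e : Sym2 V | e ∈ G.edgeSet ∧ ∃ u v : V, e = s(u, v) ∧
        outdegree G o u ≤ r ∧ ¬ outdegree G o v ≤ r}.ncard : ℝ) := by
  exact stmt_19_general G d r hr (fun v ↦ (hreg v).ge) o (fun u v huv ↦ by simp [ho huv])
    {v | outdegree G o v ≤ r} (fun _ hv ↦ hv) (fun v hv ↦ (hdeg v).resolve_left hv)
end
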